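/- arXiv:0710.4358 — 3 statements merged into one kernel-verified Lean document; each statement's English description precedes it below -/
import Mathlib

section
/- Suppose L is a metric flag labeled triangulation of the 2-sphere that is not the boundary complex of a 3-simplex (i.e. L does not consist of four pairwise-joined vertices spanning four 2-simplices). If s is a 3-Euclidean vertex of L, then both the link L_s and the closed star St_L(s) are full subcomplexes of L. -/
open Geometry

/-- The ambient space for our simplicial complexes. -/
abbrev E3 : Type := EuclideanSpace ℝ (Fin 3)

noncomputable instance : DecidableEq E3 := Classical.decEq _

namespace CoxOrb

variable (L : SimplicialComplex ℝ E3) (m : E3 → E3 → ℕ)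

/-- `L` is a labeled triangulation of the 2-sphere with edge labeling `m`:
`L` is finite, its underlying space is homeomorphic to the 2-sphere, and `m`
is symmetric with `m s t ≥ 2` on every edge `{s, t}` of `L`. -/
structure IsLabeledS2 : Prop where
  finite : L.faces.Finite
  sphere : Nonempty (L.space ≃ₜ (Metric.sphere (0 : E3) 1 : Set E3))
  symm : ∀ s t : E3, m s t = m t s
  two_le : ∀ s t : E3, s ≠ t → ({s, t} : Finset E3) ∈ L.faces → 2 ≤ m s t

/-- `L` with labeling `m` is metric flag: three pairwise-joined vertices span a
2-simplex iff the corresponding angle sum `π/m_st + π/m_tu + π/m_us` exceeds `π`. -/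
def MetricFlag : Prop :=
  ∀ s t u : E3, s ≠ t → t ≠ u → s ≠ u →
    ({s, t} : Finset E3) ∈ L.faces → ({t, u} : Finset E3) ∈ L.faces →
    ({s, u} : Finset E3) ∈ L.faces →
    (({s, t, u} : Finset E3) ∈ L.faces ↔
      1 / (m s t : ℝ) + 1 / (m t u : ℝ) + 1 / (m u s : ℝ) > 1)

/-- The link of a vertex `s`, as a set of faces of `L`. -/
def link (s : E3) : Set (Finset E3) :=
  {F | F ∈ L.faces ∧ s ∉ F ∧ insert s F ∈ L.faces}

/-- The closed star of a vertex `s`: all faces of `L` contained in some face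
containing `s`. -/
def star (s : E3) : Set (Finset E3) :=
  {F | F ∈ L.faces ∧ ∃ G ∈ L.faces, s ∈ G ∧ F ⊆ G}

/-- The vertices of the link of `s`. -/
def linkVerts (s : E3) : Set E3 :=
  {v | v ≠ s ∧ ({s, v} : Finset E3) ∈ L.faces}

/-- A set of faces `A` is a full subcomplex of `L`: every face of `L` all of
whose vertices are vertices of `A` belongs to `A`. -/
def IsFullSubcomplex (A : Set (Finset E3)) : Prop :=
  A ⊆ L.faces ∧ ∀ F ∈ L.faces, (∀ v ∈ F, ({v} : Finset E3) ∈ A) → F ∈ A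

/-- `s` is a 3-Euclidean vertex of `L`: it has valence three and the labels on
the three edges of its link have reciprocals summing to one. -/
def IsThreeEuclidean (s : E3) : Prop :=
  ({s} : Finset E3) ∈ L.faces ∧
  ∃ s₀ s₁ s₂ : E3, s₀ ≠ s₁ ∧ s₁ ≠ s₂ ∧ s₀ ≠ s₂ ∧
    linkVerts L s = {s₀, s₁, s₂} ∧
    1 / (m s₀ s₁ : ℝ) + 1 / (m s₁ s₂ : ℝ) + 1 / (m s₂ s₀ : ℝ) = 1

/-- `s` is a 4-Euclidean vertex of `L`: it has valence four, its link is the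
4-circuit on `v 0, v 1, v 2, v 3` (in cyclic order), and the labels on the
edges of the link are all `2`. -/
def IsFourEuclidean (s : E3) : Prop :=
  ({s} : Finset E3) ∈ L.faces ∧
  ∃ v : Fin 4 → E3, Function.Injective v ∧
    linkVerts L s = {v 0, v 1, v 2, v 3} ∧
    (∀ i : Fin 4, ({s, v i, v (i + 1)} : Finset E3) ∈ L.faces) ∧
    (∀ i : Fin 4, m (v i) (v (i + 1)) = 2)

/-- `L` is the boundary complex of a 3-simplex: four pairwise-joined vertices
spanning four 2-simplices. -/
def IsBoundaryOfThreeSimplex : Prop :=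
  ∃ a b c d : E3, a ≠ b ∧ a ≠ c ∧ a ≠ d ∧ b ≠ c ∧ b ≠ d ∧ c ≠ d ∧
    (∀ v : E3, ({v} : Finset E3) ∈ L.faces ↔ v = a ∨ v = b ∨ v = c ∨ v = d) ∧
    ({a, b, c} : Finset E3) ∈ L.faces ∧ ({a, b, d} : Finset E3) ∈ L.faces ∧
    ({a, c, d} : Finset E3) ∈ L.faces ∧ ({b, c, d} : Finset E3) ∈ L.faces

/-- `L` is the suspension of a 3-gon. -/
def IsSuspensionOfThreeGon : Prop :=
  ∃ t t' s₀ s₁ s₂ : E3, [t, t', s₀, s₁, s₂].Pairwise (· ≠ ·) ∧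
    (∀ v : E3, ({v} : Finset E3) ∈ L.faces ↔ v = t ∨ v = t' ∨ v = s₀ ∨ v = s₁ ∨ v = s₂) ∧
    ({s₀, s₁} : Finset E3) ∈ L.faces ∧ ({s₁, s₂} : Finset E3) ∈ L.faces ∧
    ({s₀, s₂} : Finset E3) ∈ L.faces ∧
    ({t, s₀} : Finset E3) ∈ L.faces ∧ ({t, s₁} : Finset E3) ∈ L.faces ∧
    ({t, s₂} : Finset E3) ∈ L.faces ∧
    ({t', s₀} : Finset E3) ∈ L.faces ∧ ({t', s₁} : Finset E3) ∈ L.faces ∧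
    ({t', s₂} : Finset E3) ∈ L.faces ∧
    ({t, t'} : Finset E3) ∉ L.faces

/-- The simplicial join of the subcomplex `Z` with the two points `t, t'`. -/
def joinSusp (Z : Set (Finset E3)) (t t' : E3) : Set (Finset E3) :=
  Z ∪ {{t}, {t'}} ∪ ((fun F => insert t F) '' Z) ∪ ((fun F => insert t' F) '' Z)

/-- `T` is the right-angled suspension in `L` of the subcomplex `Z` with
suspension points `t, t'` (not joined by an edge of `T`): every edge from a
suspension point to a vertex of `Z` is labeled `2`. -/
structure IsRASuspData (T Z : Set (Finset E3)) (t t' : E3) : Prop where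
  subset : T ⊆ L.faces
  zsubset : Z ⊆ L.faces
  zdown : ∀ F ∈ Z, ∀ G : Finset E3, G ⊆ F → G.Nonempty → G ∈ Z
  znonempty : Z.Nonempty
  tne : t ≠ t'
  t_notin : ∀ F ∈ Z, t ∉ F
  t'_notin : ∀ F ∈ Z, t' ∉ F
  labels : ∀ v : E3, ({v} : Finset E3) ∈ Z → m t v = 2 ∧ m t' v = 2
  eq : T = joinSusp Z t t'

/-- `T` is a right-angled suspension in `L`. -/
def IsRASusp (T : Set (Finset E3)) : Prop :=
  ∃ Z t t', IsRASuspData L m T Z t t'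

/-- The base `Z` of the suspension is neither a single vertex nor a single
edge, so that the suspension is infinite. -/
def InfiniteBase (Z : Set (Finset E3)) : Prop :=
  (¬ ∃ v : E3, Z = {({v} : Finset E3)}) ∧
  (¬ ∃ u v : E3, u ≠ v ∧ Z = {({u} : Finset E3), ({v} : Finset E3), ({u, v} : Finset E3)})

/-- `T` is an infinite, maximal right-angled suspension in `L`: it is an
RA-suspension of a full subcomplex which is neither a vertex nor an edge, and
`T` is not properly contained in another RA-suspension. -/
def IsInfMaxRASusp (T : Set (Finset E3)) : Prop :=
  (∃ Z t t', IsRASuspData L m T Z t t' ∧ InfiniteBase Z ∧ IsFullSubcomplex L Z) ∧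
  ∀ T', IsRASusp L m T' → T ⊆ T' → T = T'

/-- `v 0, v 1, v 2, v 3` (in cyclic order) form a Euclidean 4-circuit of `L`:
all four edge labels are `2` and the circuit is not the boundary of the union
of two 2-simplices of `L` sharing an edge. -/
def IsEuclidean4Circuit (v : Fin 4 → E3) : Prop :=
  Function.Injective v ∧
  (∀ i : Fin 4, ({v i, v (i + 1)} : Finset E3) ∈ L.faces) ∧
  (∀ i : Fin 4, m (v i) (v (i + 1)) = 2) ∧
  ¬ ((({v 0, v 1, v 2} : Finset E3) ∈ L.faces ∧ ({v 0, v 2, v 3} : Finset E3) ∈ L.faces) ∨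
     (({v 1, v 2, v 3} : Finset E3) ∈ L.faces ∧ ({v 0, v 1, v 3} : Finset E3) ∈ L.faces))

/-- The subcomplex consisting of the vertices and edges of the 4-circuit `v`. -/
def circuitComplex (v : Fin 4 → E3) : Set (Finset E3) :=
  {F | (∃ i : Fin 4, F = {v i}) ∨ (∃ i : Fin 4, F = {v i, v (i + 1)})}

/-- `T` is the right-angled cone on a Euclidean 4-circuit: the closed star of a
vertex `c` of valence four whose link is a Euclidean 4-circuit, all four edges
containing `c` being labeled `2`. -/
def IsRAConeOn4Circuit (T : Set (Finset E3)) : Prop :=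
  ∃ (c : E3) (v : Fin 4 → E3), IsEuclidean4Circuit L m v ∧
    linkVerts L c = {v 0, v 1, v 2, v 3} ∧
    (∀ i : Fin 4, ({c, v i, v (i + 1)} : Finset E3) ∈ L.faces) ∧
    (∀ i : Fin 4, m c (v i) = 2) ∧
    T = star L c

/-- The generating relation for Seifert subcomplexes: two infinite, maximal
RA-suspensions whose intersection is a Euclidean 4-circuit. -/
def SeifertRel (S S' : Set (Finset E3)) : Prop :=
  IsInfMaxRASusp L m S ∧ IsInfMaxRASusp L m S' ∧
  ∃ v : Fin 4 → E3, IsEuclidean4Circuit L m v ∧ S ∩ S' = circuitComplex v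

/-- `D` is a Seifert subcomplex of `L`: the union of the members of an
equivalence class of infinite, maximal RA-suspensions under the equivalence
relation generated by `SeifertRel`. -/
def IsSeifertSubcomplex (D : Set (Finset E3)) : Prop :=
  ∃ S₀, IsInfMaxRASusp L m S₀ ∧
    D = ⋃₀ {S | IsInfMaxRASusp L m S ∧ Relation.EqvGen (SeifertRel L m) S₀ S}

end CoxOrb

open CoxOrb

/-!
Let `a`, `b`, `c` be the neighbours of `s`. If `s`, `a`, `b` did not span a triangle, the faces
containing `s` would all lie in one of three simplices `A ∋ a`, `{s, c}` and `B ∋ b` with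
`A ∩ B ⊆ {s, c}`. Inside a convex neighbourhood of `s`, these simplices and their pairwise
intersections remain convex when the vertex `s` is removed, so continuous logarithms on the three
pieces can be adjusted by multiples of `2πi` and glued: every nonvanishing function on a small
punctured neighbourhood of `s` has a continuous logarithm. This fails for a coordinate function on a
punctured disc, so all three triangles at `s` are faces. As the reciprocal labels of the link sum
to `1`, metric flagness excludes the face `{a, b, c}`; hence every face with vertices in the link
lies in one of the edges opposite to `s` in these triangles, and so spans a face together with `s`.
-/

namespace CoxOrb

open Set Topology

section ContinuousLog

variable {X Y : Type*} [TopologicalSpace X] [TopologicalSpace Y]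

/-- Every continuous function on `A` without zeros has a continuous logarithm on `A`. This weak
form of simple connectedness is inherited by unions of closed sets with connected intersection. -/
def HasContinuousLogOn (A : Set X) : Prop :=
  ∀ f : X → ℂ, ContinuousOn f A → (∀ x ∈ A, f x ≠ 0) →
    ∃ l : X → ℂ, ContinuousOn l A ∧ EqOn (Complex.exp ∘ l) f A

theorem hasContinuousLogOn_empty : HasContinuousLogOn (∅ : Set X) :=
  fun _ _ _ ↦ ⟨0, continuousOn_empty _, eqOn_empty _ _⟩

theorem hasContinuousLogOn_univ [SimplyConnectedSpace X] [LocallyPathConnectedSpace X] :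
    HasContinuousLogOn (univ : Set X) := fun _ hf hf0 ↦
  Complex.exists_continuousOn_eqOn_exp_comp
    ((Homeomorph.Set.univ X).toHomotopyEquiv.simplyConnectedSpace_iff.2 inferInstance)
    isOpen_univ hf fun ⟨x, hx, h0⟩ ↦ hf0 x hx h0

theorem hasContinuousLogOn_image_iff {i : X → Y} (hi : IsEmbedding i) {A : Set X} :
    HasContinuousLogOn (i '' A) ↔ HasContinuousLogOn A := by
  refine ⟨fun h f hf hf0 ↦ ?_, fun h f hf hf0 ↦ ?_⟩
  · have hext : Function.extend i f 0 ∘ i = f := Function.extend_comp hi.injective f 0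
    obtain ⟨l, hl, hexp⟩ := h (Function.extend i f 0)
      (hi.isInducing.continuousOn_image_iff.2 (hext.symm ▸ hf))
      (forall_mem_image.2 fun x hx ↦ by simpa [hi.injective.extend_apply] using hf0 x hx)
    refine ⟨l ∘ i, hi.isInducing.continuousOn_image_iff.1 hl, fun x hx ↦ ?_⟩
    simpa [hi.injective.extend_apply] using hexp (mem_image_of_mem i hx)
  · obtain ⟨l, hl, hexp⟩ := h (f ∘ i) (hi.isInducing.continuousOn_image_iff.1 hf)
      fun x hx ↦ hf0 _ (mem_image_of_mem i hx)
    have hext : Function.extend i l 0 ∘ i = l := Function.extend_comp hi.injective l 0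
    refine ⟨Function.extend i l 0, hi.isInducing.continuousOn_image_iff.2 (hext.symm ▸ hl), ?_⟩
    rintro _ ⟨x, hx, rfl⟩
    simpa [hi.injective.extend_apply] using hexp hx

theorem hasContinuousLogOn_of_convex {E : Type*} [AddCommGroup E] [Module ℝ E]
    [TopologicalSpace E] [IsTopologicalAddGroup E] [ContinuousSMul ℝ E] [LocallyConvexSpace ℝ E]
    {A : Set E} (hA : Convex ℝ A) : HasContinuousLogOn A := by
  rcases A.eq_empty_or_nonempty with rfl | hne
  · exact hasContinuousLogOn_empty
  have := hA.contractibleSpace hne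
  have := hA.locallyPathConnectedSpace
  have himage := (hasContinuousLogOn_image_iff (IsEmbedding.subtypeVal (p := (· ∈ A)))).2
    hasContinuousLogOn_univ
  rwa [image_univ, Subtype.range_coe] at himage

theorem eqOn_of_eqOn_exp {S : Set X} (hS : IsPreconnected S) {l l' : X → ℂ}
    (hl : ContinuousOn l S) (hl' : ContinuousOn l' S)
    (hexp : EqOn (Complex.exp ∘ l) (Complex.exp ∘ l') S) {a : X} (ha : a ∈ S)
    (heq : l a = l' a) : EqOn l l' S :=
  Complex.isCoveringMap_exp.eqOn_of_comp_eqOn hS hl hl' (fun _ hx ↦ Subtype.ext (hexp hx)) ha heq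

theorem HasContinuousLogOn.exists_eqOn {A S : Set X} (hA : HasContinuousLogOn A) {f : X → ℂ}
    (hf : ContinuousOn f A) (hf0 : ∀ x ∈ A, f x ≠ 0) (hSA : S ⊆ A) (hS : IsPreconnected S)
    {l : X → ℂ} (hl : ContinuousOn l S) (hexp : EqOn (Complex.exp ∘ l) f S) :
    ∃ l' : X → ℂ, ContinuousOn l' A ∧ EqOn (Complex.exp ∘ l') f A ∧ EqOn l l' S := by
  obtain ⟨l₀, hl₀, hexp₀⟩ := hA f hf hf0
  rcases S.eq_empty_or_nonempty with rfl | ⟨a, ha⟩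
  · exact ⟨l₀, hl₀, hexp₀, eqOn_empty _ _⟩
  obtain ⟨n, hn⟩ := Complex.exp_eq_exp_iff_exists_int.1 ((hexp ha).trans (hexp₀ (hSA ha)).symm)
  have hl' : ContinuousOn (fun x ↦ l₀ x + n * (2 * Real.pi * Complex.I)) A :=
    hl₀.add continuousOn_const
  have hexp' : EqOn (Complex.exp ∘ fun x ↦ l₀ x + n * (2 * Real.pi * Complex.I)) f A :=
    fun x hx ↦ (Complex.exp_eq_exp_iff_exists_int.2 ⟨n, rfl⟩).trans (hexp₀ hx)
  exact ⟨_, hl', hexp', eqOn_of_eqOn_exp hS hl (hl'.mono hSA)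
    (hexp.trans (hexp'.mono hSA).symm) ha hn⟩

theorem continuousOn_union_inter_of_isClosed {K₁ K₂ W : Set X} (hK₁ : IsClosed K₁)
    (hK₂ : IsClosed K₂) {f : X → Y} (hf₁ : ContinuousOn f (K₁ ∩ W))
    (hf₂ : ContinuousOn f (K₂ ∩ W)) : ContinuousOn f ((K₁ ∪ K₂) ∩ W) := by
  simp only [inter_comm _ W, ← Subtype.image_preimage_coe,
    IsInducing.subtypeVal.continuousOn_image_iff] at hf₁ hf₂ ⊢
  exact hf₁.union_of_isClosed hf₂ (hK₁.preimage continuous_subtype_val)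
    (hK₂.preimage continuous_subtype_val)

theorem HasContinuousLogOn.union_inter {K₁ K₂ W : Set X} (hK₁ : IsClosed K₁) (hK₂ : IsClosed K₂)
    (h₁ : HasContinuousLogOn (K₁ ∩ W)) (h₂ : HasContinuousLogOn (K₂ ∩ W))
    (hconn : IsPreconnected (K₁ ∩ K₂ ∩ W)) : HasContinuousLogOn ((K₁ ∪ K₂) ∩ W) := by
  classical
  intro f hf hf0
  have hsub₁ : K₁ ∩ W ⊆ (K₁ ∪ K₂) ∩ W := inter_subset_inter_left W subset_union_left
  have hsub₂ : K₂ ∩ W ⊆ (K₁ ∪ K₂) ∩ W := inter_subset_inter_left W subset_union_right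
  have hsub₁₂ : K₁ ∩ K₂ ∩ W ⊆ K₁ ∩ W := inter_subset_inter_left W inter_subset_left
  obtain ⟨l₁, hl₁, hexp₁⟩ := h₁ f (hf.mono hsub₁) fun x hx ↦ hf0 x (hsub₁ hx)
  obtain ⟨l₂, hl₂, hexp₂, heq⟩ := h₂.exists_eqOn (hf.mono hsub₂) (fun x hx ↦ hf0 x (hsub₂ hx))
    (inter_subset_inter_left W inter_subset_right) hconn (hl₁.mono hsub₁₂) (hexp₁.mono hsub₁₂)
  have hpw₁ : EqOn (K₁.piecewise l₁ l₂) l₁ (K₁ ∩ W) := fun x hx ↦ piecewise_eq_of_mem _ _ _ hx.1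
  have hpw₂ : EqOn (K₁.piecewise l₁ l₂) l₂ (K₂ ∩ W) := by
    intro x hx
    by_cases hx₁ : x ∈ K₁
    · exact (piecewise_eq_of_mem _ _ _ hx₁).trans (heq ⟨⟨hx₁, hx.1⟩, hx.2⟩)
    · exact piecewise_eq_of_notMem _ _ _ hx₁
  refine ⟨K₁.piecewise l₁ l₂, continuousOn_union_inter_of_isClosed hK₁ hK₂ (hl₁.congr hpw₁)
    (hl₂.congr hpw₂), ?_⟩
  rw [union_inter_distrib_right]
  exact (hpw₁.comp_left.trans hexp₁).union (hpw₂.comp_left.trans hexp₂)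

end ContinuousLog

section PlanarPoint

theorem not_exists_continuous_exp_eq_circle :
    ¬ ∃ l : Circle → ℂ, Continuous l ∧ ∀ z, Complex.exp (l z) = z := by
  rintro ⟨l, hl, hexp⟩
  have heq : EqOn (fun θ : ℝ ↦ l (Circle.exp θ)) (fun θ ↦ l 1 + θ * Complex.I) univ :=
    eqOn_of_eqOn_exp isPreconnected_univ (by fun_prop) (by fun_prop)
      (fun θ _ ↦ by simp [hexp, Complex.exp_add]) (mem_univ 0) (by simp)
  simpa using heq (mem_univ (2 * Real.pi))

theorem not_hasContinuousLogOn_sdiff_singleton {X : Type*} [TopologicalSpace X]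
    (φ : OpenPartialHomeomorph X ℂ) {x : X} (hx : x ∈ φ.source) {U : Set X} (hU : U ∈ 𝓝 x)
    (hUφ : U ⊆ φ.source) : ¬ HasContinuousLogOn (U \ {x}) := by
  intro hlog
  obtain ⟨l, hl, hexp⟩ := hlog (fun y ↦ φ y - φ x)
    ((φ.continuousOn.mono (sdiff_subset.trans hUφ)).sub continuousOn_const)
    fun y hy h0 ↦ hy.2 (φ.injOn (hUφ hy.1) hx (sub_eq_zero.1 h0))
  have hpre : φ.target ∩ φ.symm ⁻¹' U ∈ 𝓝 (φ x) :=
    Filter.inter_mem (φ.open_target.mem_nhds (φ.map_source hx))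
      ((φ.tendsto_symm hx).eventually_mem hU)
  obtain ⟨δ, hδ, hball⟩ := Metric.nhds_basis_closedBall.mem_iff.1 hpre
  let γ : Circle → ℂ := fun z ↦ φ x + δ * z
  have hγ : ∀ z, γ z ∈ φ.target ∩ φ.symm ⁻¹' U := fun z ↦
    hball (by simp [γ, abs_of_pos hδ, Circle.norm_coe])
  have hγx : ∀ z, φ.symm (γ z) ≠ x := by
    intro z hz
    have hγz : γ z = φ x := by rw [← φ.right_inv (hγ z).1, hz]
    simp [γ, hδ.ne'] at hγz
  have hmem : ∀ z, φ.symm (γ z) ∈ U \ {x} := fun z ↦ ⟨(hγ z).2, hγx z⟩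
  have hsymm : Continuous fun z ↦ φ.symm (γ z) :=
    φ.symm.continuousOn.comp_continuous (by fun_prop) fun z ↦ (hγ z).1
  refine not_exists_continuous_exp_eq_circle
    ⟨fun z ↦ l (φ.symm (γ z)) - Real.log δ,
      (hl.comp_continuous hsymm hmem).sub continuous_const, fun z ↦ ?_⟩
  have hexpz : Complex.exp (l (φ.symm (γ z))) = δ * z := by
    simpa [φ.right_inv (hγ z).1, γ] using hexp (hmem z)
  rw [Complex.exp_sub, hexpz, ← Complex.ofReal_exp, Real.exp_log hδ,
    mul_div_cancel_left₀ _ (Complex.ofReal_ne_zero.2 hδ.ne')]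

theorem exists_nhds_not_hasContinuousLogOn {E : Type*} [TopologicalSpace E] {X : Set E} {s : E}
    (φ : OpenPartialHomeomorph X ℂ) (hs : s ∈ Subtype.val '' φ.source) :
    ∃ V ∈ 𝓝 s, ∀ W ∈ 𝓝 s, W ⊆ V → ¬ HasContinuousLogOn (X ∩ (W \ {s})) := by
  obtain ⟨x, hx, rfl⟩ := hs
  obtain ⟨V, hV, hVφ⟩ := mem_nhds_subtype _ _ _ |>.1 (φ.open_source.mem_nhds hx)
  refine ⟨V, hV, fun W hW hWV hlog ↦ ?_⟩
  refine not_hasContinuousLogOn_sdiff_singleton φ hx (U := Subtype.val ⁻¹' W)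
    (continuousAt_subtype_val.preimage_mem_nhds hW) ((preimage_mono hWV).trans hVφ) ?_
  have hpre : Subtype.val ⁻¹' W \ {x} = (Subtype.val ⁻¹' (W \ {(x : E)}) : Set X) := by
    ext
    simp [Subtype.ext_iff]
  rwa [← hasContinuousLogOn_image_iff IsEmbedding.subtypeVal, hpre, Subtype.image_preimage_coe]

theorem exists_complex_chart_of_homeomorph_sphere {X : Type*} [TopologicalSpace X]
    {E : Type*} [NormedAddCommGroup E] [InnerProductSpace ℝ E] [Fact (Module.finrank ℝ E = 2 + 1)]
    (h : X ≃ₜ Metric.sphere (0 : E) 1) (x : X) :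
    ∃ φ : OpenPartialHomeomorph X ℂ, x ∈ φ.source :=
  ⟨(h.toOpenPartialHomeomorph.trans (chartAt (EuclideanSpace ℝ (Fin 2)) (h x))).transHomeomorph
    Complex.orthonormalBasisOneI.repr.symm.toHomeomorph, by simp⟩

end PlanarPoint

section SimplicialComplex

variable {E : Type*} [AddCommGroup E] [Module ℝ E] {L : SimplicialComplex ℝ E} {s a b c : E}
  {F G H : Finset E}

theorem mem_vertices_of_mem (hF : F ∈ L.faces) (hs : s ∈ F) : s ∈ L.vertices :=
  L.down_closed hF (Finset.singleton_subset_iff.2 hs) (Finset.singleton_nonempty s)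

section Topology

variable [TopologicalSpace E] [IsTopologicalAddGroup E] [ContinuousSMul ℝ E] [T2Space E]

theorem eventually_mem_of_mem_convexHull (hfin : L.faces.Finite) (hs : s ∈ L.vertices) :
    ∀ᶠ y in 𝓝 s, ∀ F ∈ L.faces, y ∈ convexHull ℝ (F : Set E) → s ∈ F := by
  refine hfin.eventually_all.2 fun F hF ↦ ?_
  by_cases hsF : s ∈ F
  · exact .of_forall fun _ _ ↦ hsF
  · filter_upwards [(F.finite_toSet.isClosed_convexHull ℝ).isOpen_compl.mem_nhds
      (mt (L.vertex_mem_convexHull_iff hs hF).1 hsF)] with y hy hyF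
    exact absurd hyF hy

variable [LocallyConvexSpace ℝ E]

theorem convex_convexHull_sdiff_singleton (hF : F ∈ L.faces) (hs : s ∈ F) :
    Convex ℝ (convexHull ℝ (F : Set E) \ {s}) := by
  classical
  suffices hext : s ∈ (convexHull ℝ (F : Set E)).extremePoints ℝ from
    ((convex_convexHull ℝ _).mem_extremePoints_iff_convex_sdiff.1 hext).2
  -- Otherwise, by Krein–Milman, the vertices of `F` other than `s` already span `F`.
  by_contra hext
  have hsub : (convexHull ℝ (F : Set E)).extremePoints ℝ ⊆ (F.erase s : Finset E) := fun x hx ↦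
    Finset.mem_erase.2 ⟨fun h ↦ hext (h ▸ hx), extremePoints_convexHull_subset hx⟩
  have hspan : convexHull ℝ (F : Set E) ⊆ convexHull ℝ (F.erase s : Finset E) := by
    rw [← closure_convexHull_extremePoints (F.finite_toSet.isCompact_convexHull ℝ)
      (convex_convexHull ℝ _)]
    exact closure_minimal (convexHull_mono hsub) ((Finset.finite_toSet _).isClosed_convexHull ℝ)
  have hs' : s ∈ convexHull ℝ (F.erase s : Finset E) := hspan (subset_convexHull ℝ _ hs)
  have herase : F.erase s ∈ L.faces := L.down_closed hF (Finset.erase_subset s F)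
    (Finset.coe_nonempty.1 (convexHull_nonempty_iff.1 ⟨s, hs'⟩))
  exact Finset.notMem_erase s F
    ((L.vertex_mem_convexHull_iff (mem_vertices_of_mem hF hs) herase).1 hs')

theorem convex_convexHull_inter_sdiff_singleton {W : Set E} (hW : Convex ℝ W) (hF : F ∈ L.faces)
    (hs : s ∈ F) : Convex ℝ (convexHull ℝ (F : Set E) ∩ (W \ {s})) := by
  rw [inter_comm, sdiff_inter_right_comm, inter_sdiff_assoc]
  exact hW.inter (convex_convexHull_sdiff_singleton hF hs)

theorem hasContinuousLogOn_convexHull_union_inter_sdiff_singleton (hF : F ∈ L.faces)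
    (hG : G ∈ L.faces) (hH : H ∈ L.faces) (hsF : s ∈ F) (hsG : s ∈ G) (hsH : s ∈ H)
    (hFH : (F ∩ H : Set E) ⊆ G) {W : Set E} (hW : Convex ℝ W) :
    HasContinuousLogOn
      ((convexHull ℝ (F : Set E) ∪ convexHull ℝ (G : Set E) ∪ convexHull ℝ (H : Set E)) ∩
        (W \ {s})) := by
  have hconvF := convex_convexHull_inter_sdiff_singleton hW hF hsF
  have hconvG := convex_convexHull_inter_sdiff_singleton hW hG hsG
  have hconvH := convex_convexHull_inter_sdiff_singleton hW hH hsH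
  have hclosed (K : Finset E) : IsClosed (convexHull ℝ (K : Set E)) :=
    K.finite_toSet.isClosed_convexHull ℝ
  have hinter : (convexHull ℝ (F : Set E) ∪ convexHull ℝ (G : Set E)) ∩ convexHull ℝ (H : Set E) =
      convexHull ℝ (G : Set E) ∩ convexHull ℝ (H : Set E) := by
    rw [union_inter_distrib_right, union_eq_right]
    refine subset_inter ?_ inter_subset_right
    rw [L.convexHull_inter_convexHull hF hH]
    exact convexHull_mono hFH
  refine .union_inter ((hclosed F).union (hclosed G)) (hclosed H)
    (.union_inter (hclosed F) (hclosed G) (hasContinuousLogOn_of_convex hconvF)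
      (hasContinuousLogOn_of_convex hconvG) ?_) (hasContinuousLogOn_of_convex hconvH) ?_
  · rw [inter_inter_distrib_right]
    exact (hconvF.inter hconvG).isPreconnected
  · rw [hinter, inter_inter_distrib_right]
    exact (hconvG.inter hconvH).isPreconnected

theorem not_inter_subset_of_forall_subset_or (hfin : L.faces.Finite)
    (φ : OpenPartialHomeomorph L.space ℂ) (hφ : s ∈ Subtype.val '' φ.source) (hF : F ∈ L.faces)
    (hG : G ∈ L.faces) (hH : H ∈ L.faces) (hsF : s ∈ F) (hsG : s ∈ G) (hsH : s ∈ H)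
    (hcover : ∀ K ∈ L.faces, s ∈ K → K ⊆ F ∨ K ⊆ G ∨ K ⊆ H) : ¬ (F ∩ H : Set E) ⊆ G := by
  intro hFH
  obtain ⟨V, hV, hnot⟩ := exists_nhds_not_hasContinuousLogOn φ hφ
  obtain ⟨W, ⟨hW, hWconv⟩, hWsub⟩ := (LocallyConvexSpace.convex_basis (𝕜 := ℝ) s).mem_iff.1
    (Filter.inter_mem hV (eventually_mem_of_mem_convexHull hfin (mem_vertices_of_mem hF hsF)))
  refine hnot W hW (hWsub.trans inter_subset_left) ?_
  convert hasContinuousLogOn_convexHull_union_inter_sdiff_singleton hF hG hH hsF hsG hsH hFH hWconv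
    using 1
  refine Subset.antisymm (fun x hx ↦ ⟨?_, hx.2⟩) (inter_subset_inter_left _ ?_)
  · obtain ⟨K, hK, hxK⟩ := SimplicialComplex.mem_space_iff.1 hx.1
    rcases hcover K hK ((hWsub hx.2.1).2 K hK hxK) with hKF | hKG | hKH
    · exact .inl (.inl (convexHull_mono hKF hxK))
    · exact .inl (.inr (convexHull_mono hKG hxK))
    · exact .inr (convexHull_mono hKH hxK)
  · exact union_subset (union_subset (L.convexHull_subset_space hF)
      (L.convexHull_subset_space hG)) (L.convexHull_subset_space hH)

end Topology

variable [DecidableEq E]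

theorem exists_isGreatest_faces_subset_insert (hG : G ∈ L.faces) (c : E) :
    ∃ F₀, IsGreatest {F ∈ L.faces | G ⊆ F ∧ F ⊆ insert c G} F₀ := by
  by_cases h : insert c G ∈ L.faces
  · exact ⟨insert c G, ⟨h, Finset.subset_insert c G, subset_rfl⟩, fun F hF ↦ hF.2.2⟩
  · refine ⟨G, ⟨hG, subset_rfl, Finset.subset_insert c G⟩, fun F ⟨hF, hGF, hFG⟩ ↦ ?_⟩
    rw [← Finset.subset_insert_iff_of_notMem fun hc ↦
      h (L.down_closed hF (Finset.insert_subset hc hGF) (Finset.insert_nonempty c G))]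
    exact hFG

theorem triangle_mem_faces_of_forall_subset [TopologicalSpace E] [IsTopologicalAddGroup E]
    [ContinuousSMul ℝ E] [T2Space E] [LocallyConvexSpace ℝ E] (hfin : L.faces.Finite)
    (φ : OpenPartialHomeomorph L.space ℂ) (hφ : s ∈ Subtype.val '' φ.source)
    (ha : {s, a} ∈ L.faces) (hb : {s, b} ∈ L.faces) (hc : {s, c} ∈ L.faces)
    (hsub : ∀ F ∈ L.faces, s ∈ F → F ⊆ {s, a, b, c}) : {s, a, b} ∈ L.faces := by
  by_contra hab
  have hnotMem : ∀ K ∈ L.faces, s ∈ K → a ∈ K → b ∉ K := fun K hK hs ha hb ↦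
    hab (L.down_closed hK (by grind) (Finset.insert_nonempty _ _))
  have hsubA : ∀ K ∈ L.faces, s ∈ K → a ∈ K → K ⊆ {c, s, a} := by grind
  have hsubB : ∀ K ∈ L.faces, s ∈ K → b ∈ K → K ⊆ {c, s, b} := by grind
  have hsubC : ∀ K ∈ L.faces, s ∈ K → a ∉ K → b ∉ K → K ⊆ {s, c} := by grind
  have hinter : ({c, s, a} ∩ {c, s, b} : Finset E) ⊆ {s, c} := by grind
  have hpair {x : E} {K : Finset E} (hs : s ∈ K) (hx : x ∈ K) : {s, x} ⊆ K :=
    Finset.insert_subset hs (Finset.singleton_subset_iff.2 hx)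
  obtain ⟨A, ⟨hA, hsaA, hAsub⟩, hAgreatest⟩ := exists_isGreatest_faces_subset_insert ha c
  obtain ⟨B, ⟨hB, hsbB, hBsub⟩, hBgreatest⟩ := exists_isGreatest_faces_subset_insert hb c
  refine not_inter_subset_of_forall_subset_or hfin φ hφ hA hc hB (hsaA (by simp)) (by simp)
    (hsbB (by simp)) (fun K hK hs ↦ ?_)
    fun x hx ↦ hinter (Finset.mem_inter.2 ⟨hAsub hx.1, hBsub hx.2⟩)
  by_cases haK : a ∈ K
  · exact .inl (hAgreatest ⟨hK, hpair hs haK, hsubA K hK hs haK⟩)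
  by_cases hbK : b ∈ K
  · exact .inr (.inr (hBgreatest ⟨hK, hpair hs hbK, hsubB K hK hs hbK⟩))
  · exact .inr (.inl (hsubC K hK hs haK hbK))

theorem insert_mem_faces_of_subset_triple (hab : {s, a, b} ∈ L.faces) (hbc : {s, b, c} ∈ L.faces)
    (hac : {s, a, c} ∈ L.faces) (habc : {a, b, c} ∉ L.faces) (hF : F ∈ L.faces)
    (hsub : F ⊆ {a, b, c}) : insert s F ∈ L.faces := by
  obtain ⟨x, hx, hxF⟩ := Finset.ssubset_iff_exists_subset_erase.1
    (hsub.ssubset_of_ne fun h ↦ habc (h ▸ hF))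
  have hface {G : Finset E} (hG : G ∈ L.faces) (h : insert s F ⊆ G) : insert s F ∈ L.faces :=
    L.down_closed hG h (Finset.insert_nonempty s F)
  simp only [Finset.mem_insert, Finset.mem_singleton] at hx
  rcases hx with rfl | rfl | rfl
  · exact hface hbc (by grind)
  · exact hface hac (by grind)
  · exact hface hab (by grind)

end SimplicialComplex

section LabeledComplex

variable {L : SimplicialComplex ℝ E3} {m : E3 → E3 → ℕ} {s a b c : E3} {F : Finset E3}

theorem subset_insert_linkVerts (hF : F ∈ L.faces) (hs : s ∈ F) :
    (F : Set E3) ⊆ insert s (linkVerts L s) := fun _ hv ↦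
  or_iff_not_imp_left.2 fun hvs ↦
    ⟨hvs, L.down_closed hF (Finset.insert_subset hs (Finset.singleton_subset_iff.2 hv))
      (Finset.insert_nonempty _ _)⟩

theorem triangle_mem_faces_of_linkVerts_eq (hfin : L.faces.Finite)
    (φ : OpenPartialHomeomorph L.space ℂ) (hφ : s ∈ Subtype.val '' φ.source)
    (hlink : linkVerts L s = {a, b, c}) : {s, a, b} ∈ L.faces := by
  have hedge : ∀ v ∈ ({a, b, c} : Set E3), {s, v} ∈ L.faces := fun v hv ↦ (hlink ▸ hv).2
  refine triangle_mem_faces_of_forall_subset hfin φ hφ (hedge a (by simp)) (hedge b (by simp))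
    (hedge c (by simp)) fun F hF hs ↦ ?_
  simpa [hlink, ← Finset.coe_subset] using subset_insert_linkVerts hF hs

theorem MetricFlag.triangle_notMem_faces (hflag : MetricFlag L m) (hab : a ≠ b) (hbc : b ≠ c)
    (hac : a ≠ c) (hm : 1 / (m a b : ℝ) + 1 / (m b c : ℝ) + 1 / (m c a : ℝ) ≤ 1) :
    {a, b, c} ∉ L.faces := by
  intro habc
  have hpair {x y : E3} (h : ({x, y} : Finset E3) ⊆ {a, b, c}) : {x, y} ∈ L.faces :=
    L.down_closed habc h (Finset.insert_nonempty _ _)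
  exact hm.not_gt ((hflag a b c hab hbc hac (hpair (by grind)) (hpair (by grind))
    (hpair (by grind))).1 habc)

theorem mem_linkVerts_of_singleton_mem_link {v : E3} (hv : {v} ∈ link L s) :
    v ∈ linkVerts L s :=
  ⟨fun h ↦ hv.2.1 (by simp [h]), hv.2.2⟩

theorem isFullSubcomplex_link
    (hcone : ∀ F ∈ L.faces, (F : Set E3) ⊆ linkVerts L s → insert s F ∈ L.faces) :
    IsFullSubcomplex L (link L s) := by
  refine ⟨fun F hF ↦ hF.1, fun F hF hverts ↦ ?_⟩
  have hsub : (F : Set E3) ⊆ linkVerts L s := fun v hv ↦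
    mem_linkVerts_of_singleton_mem_link (hverts v hv)
  exact ⟨hF, fun hs ↦ (hsub hs).1 rfl, hcone F hF hsub⟩

theorem isFullSubcomplex_star
    (hcone : ∀ F ∈ L.faces, (F : Set E3) ⊆ linkVerts L s → insert s F ∈ L.faces) :
    IsFullSubcomplex L (star L s) := by
  refine ⟨fun F hF ↦ hF.1, fun F hF hverts ↦ ?_⟩
  by_cases hs : s ∈ F
  · exact ⟨hF, F, hF, hs, subset_rfl⟩
  have hsub : (F : Set E3) ⊆ linkVerts L s := by
    intro v hv
    obtain ⟨-, G, hG, hsG, hvG⟩ := hverts v hv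
    exact (subset_insert_linkVerts hG hsG (Finset.singleton_subset_iff.1 hvG)).resolve_left
      fun h ↦ hs (h ▸ hv)
  exact ⟨hF, insert s F, hcone F hF hsub, F.mem_insert_self s, F.subset_insert s⟩

end LabeledComplex

end CoxOrb

theorem link_and_star_full_of_threeEuclidean_general
    (L : SimplicialComplex ℝ E3) (m : E3 → E3 → ℕ) (s : E3)
    (hfin : L.faces.Finite) (φ : OpenPartialHomeomorph L.space ℂ)
    (hφ : s ∈ Subtype.val '' φ.source) (hflag : MetricFlag L m) (hs : IsThreeEuclidean L m s) :
    IsFullSubcomplex L (link L s) ∧ IsFullSubcomplex L (star L s) := by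
  obtain ⟨-, a, b, c, hab, hbc, hac, hlink, hm⟩ := hs
  have hsab : {s, a, b} ∈ L.faces := triangle_mem_faces_of_linkVerts_eq hfin φ hφ hlink
  have hsbc : {s, b, c} ∈ L.faces := triangle_mem_faces_of_linkVerts_eq (c := a) hfin φ hφ
    (hlink.trans (by grind))
  have hsac : {s, a, c} ∈ L.faces := triangle_mem_faces_of_linkVerts_eq (c := b) hfin φ hφ
    (hlink.trans (by grind))
  have habc : {a, b, c} ∉ L.faces := hflag.triangle_notMem_faces hab hbc hac hm.le
  have hcone : ∀ F ∈ L.faces, (F : Set E3) ⊆ linkVerts L s → insert s F ∈ L.faces := by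
    intro F hF hsub
    refine insert_mem_faces_of_subset_triple hsab hsbc hsac habc hF ?_
    simpa [hlink, ← Finset.coe_subset] using hsub
  exact ⟨isFullSubcomplex_link hcone, isFullSubcomplex_star hcone⟩

/-- If `L` is a metric flag labeled triangulation of the 2-sphere which is not
the boundary of a 3-simplex and `s` is a 3-Euclidean vertex, then the link and
the closed star of `s` are full subcomplexes of `L`. -/
theorem link_and_star_full_of_threeEuclidean
    (L : SimplicialComplex ℝ E3) (m : E3 → E3 → ℕ)
    (hL : IsLabeledS2 L m) (hflag : MetricFlag L m)
    (hnot : ¬ IsBoundaryOfThreeSimplex L)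
    (s : E3) (hs : IsThreeEuclidean L m s) :
    IsFullSubcomplex L (link L s) ∧ IsFullSubcomplex L (star L s) := by
  obtain ⟨h⟩ := hL.sphere
  have : Fact (Module.finrank ℝ E3 = 2 + 1) := ⟨finrank_euclideanSpace_fin⟩
  obtain ⟨φ, hφ⟩ := exists_complex_chart_of_homeomorph_sphere h ⟨s, L.vertices_subset_space hs.1⟩
  exact link_and_star_full_of_threeEuclidean_general L m s hL.finite φ ⟨_, hφ, rfl⟩ hflag hs
end

section
/- Suppose L is a metric flag labeled triangulation of the 2-sphere that is not the suspension of a 3-gon. If s is a 4-Euclidean vertex of L, then both the link L_s and the closed star St_L(s) are full subcomplexes of L. -/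
open Geometry

open CoxOrb

/-!
A 3-circuit with two edges labeled `2` is filled in a metric flag complex, whatever the third label
is. So if two opposite vertices `v₀, v₂` in the link of a 4-Euclidean vertex `s` were joined by an
edge, both `{v₀, v₁, v₂}` and `{v₂, v₃, v₀}` would be 2-simplices, and `L` would contain the
suspension of the 3-gon `s, v₀, v₂` with suspension points `v₁, v₃`. A 2-sphere contains no proper
2-sphere, so `L` would be that suspension. Hence the link is a 4-circuit without diagonals, which
makes it full, and the star of a vertex with full link is full.

That a 2-sphere contains no proper 2-sphere comes from the Borsuk–Ulam theorem: the suspension is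
the image of a map from the sphere sending antipodal points to disjoint simplices, and a map from
the sphere to itself separating antipodal points is onto.
-/

namespace CoxOrb

section BorsukUlam

open Metric

theorem exists_eq_zero_of_odd_on_unit_circle {g : ℂ → ℂ} (hg : Continuous g)
    (hodd : ∀ z : ℂ, ‖z‖ = 1 → g (-z) = -g z) : ∃ z, g z = 0 := by
  by_contra! hg₀
  have : ContractibleSpace (Set.univ : Set ℂ) :=
    convex_univ.contractibleSpace Set.univ_nonempty
  obtain ⟨h, hh, hexp⟩ := Complex.exists_continuousOn_eqOn_exp_comp
    (SimplyConnectedSpace.ofContractible (Set.univ : Set ℂ)) isOpen_univ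
    hg.continuousOn (by simpa using hg₀)
  rw [continuousOn_univ] at hh
  -- `exp (d z) = -1` on the unit circle, while the odd function `im ∘ d` has a zero there.
  let d : ℂ → ℂ := fun z => h (-z) - h z
  have exp_d : ∀ z : ℂ, ‖z‖ = 1 → Complex.exp (d z) = -1 := fun z hz => by
    have hexp' : ∀ w, Complex.exp (h w) = g w := fun w => hexp (Set.mem_univ w)
    rw [Complex.exp_sub, hexp', hexp', hodd z hz, neg_div, div_self (hg₀ z)]
  obtain ⟨z, hz, hdz⟩ : ∃ z ∈ sphere (0 : ℂ) 1, (d z).im = 0 := by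
    have hd : ContinuousOn (fun z => (d z).im) (sphere 0 1) := by fun_prop
    have hd_neg : (d (-1)).im = -(d 1).im := by simp [d]
    have hconn := isPreconnected_sphere (E := ℂ) (by simp) 0 1
    rcases le_total (d 1).im 0 with h₁ | h₁
    · exact hconn.intermediate_value (a := 1) (b := -1) (by simp) (by simp) hd
        ⟨h₁, by linarith⟩
    · exact hconn.intermediate_value (a := -1) (b := 1) (by simp) (by simp) hd
        ⟨by linarith, h₁⟩
  have hre := congrArg Complex.re (exp_d z (by simpa using hz))
  rw [Complex.exp_re, hdz, Real.cos_zero, mul_one, Complex.neg_re, Complex.one_re] at hre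
  linarith [Real.exp_pos (d z).re]

/-- The inverse stereographic projection `ℂ → S²` from the south pole, chosen because it is
defined on all of `ℂ` and carries the unit circle to the equator. -/
noncomputable def invStereo (z : ℂ) : sphere (0 : E3) 1 :=
  ⟨(1 + ‖z‖ ^ 2)⁻¹ • !₂[2 * z.re, 2 * z.im, 1 - ‖z‖ ^ 2], by
    have hpos : 0 < 1 + ‖z‖ ^ 2 := by positivity
    rw [mem_sphere_zero_iff_norm, norm_smul, norm_inv, Real.norm_of_nonneg hpos.le,
      inv_mul_eq_one₀ hpos.ne', EuclideanSpace.norm_eq, eq_comm,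
      Real.sqrt_eq_iff_mul_self_eq_of_pos hpos]
    simp only [Fin.sum_univ_three, Real.norm_eq_abs, sq_abs, Complex.sq_norm, Complex.normSq_apply,
      Matrix.cons_val_zero, Matrix.cons_val_one, Matrix.cons_val]
    ring⟩

theorem continuous_invStereo : Continuous invStereo := by
  have hscale : Continuous fun z : ℂ => (1 + ‖z‖ ^ 2)⁻¹ :=
    Continuous.inv₀ (by fun_prop) fun z => by positivity
  have hvec : Continuous fun z : ℂ => (!₂[2 * z.re, 2 * z.im, 1 - ‖z‖ ^ 2] : E3) := by fun_prop
  exact (hscale.smul hvec).subtype_mk _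

theorem invStereo_neg {z : ℂ} (hz : ‖z‖ = 1) : invStereo (-z) = -invStereo z := by
  ext i
  fin_cases i <;> simp [invStereo, hz]

theorem borsuk_ulam_two {f : sphere (0 : E3) 1 → EuclideanSpace ℝ (Fin 2)} (hf : Continuous f) :
    ∃ x, f (-x) = f x := by
  let φ := Complex.orthonormalBasisOneI.repr.symm
  let g : ℂ → ℂ := fun z => φ (f (-invStereo z) - f (invStereo z))
  have hg : Continuous g :=
    φ.continuous.comp <| (hf.comp continuous_invStereo.neg).sub (hf.comp continuous_invStereo)
  obtain ⟨z, hz⟩ := exists_eq_zero_of_odd_on_unit_circle hg fun z hz => by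
    simp only [g, invStereo_neg hz, neg_neg, ← map_neg, neg_sub]
  exact ⟨invStereo z, sub_eq_zero.1 (φ.map_eq_zero_iff.1 hz)⟩

theorem surjective_of_apply_neg_ne {f : sphere (0 : E3) 1 → sphere (0 : E3) 1}
    (hf : Continuous f) (hne : ∀ x, f (-x) ≠ f x) : Function.Surjective f := by
  intro q
  by_contra! hq
  have : Fact (Module.finrank ℝ E3 = 2 + 1) := ⟨by simp⟩
  have hsource : ∀ x, f x ∈ (stereographic' 2 q).source := by simpa using hq
  obtain ⟨x, hx⟩ := borsuk_ulam_two <|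
    (stereographic' 2 q).continuousOn.comp_continuous hf hsource
  exact hne x ((stereographic' 2 q).injOn (hsource _) (hsource _) hx)

end BorsukUlam

section SimplicialComplex

theorem subset_of_centroid_mem_convexHull {𝕜 E : Type*} [Field 𝕜] [LinearOrder 𝕜]
    [IsStrictOrderedRing 𝕜] [AddCommGroup E] [Module 𝕜 E] {K : SimplicialComplex 𝕜 E}
    {F G : Finset E} (hF : F ∈ K.faces) (hG : G ∈ K.faces)
    (h : F.centroid 𝕜 id ∈ convexHull 𝕜 (G : Set E)) : F ⊆ G := by
  classical
  have hne := K.nonempty_of_mem_faces hF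
  have hcard : (F.card : 𝕜) ≠ 0 := by simpa using hne.ne_empty
  have hmem : F.centroid 𝕜 id ∈ convexHull 𝕜 ((F ∩ G : Finset E) : Set E) := by
    rw [Finset.coe_inter]
    exact K.inter_subset_convexHull hF hG ⟨F.centroid_mem_convexHull hne, h⟩
  obtain ⟨w, -, hw₁, hw⟩ := Finset.mem_convexHull'.1 hmem
  have hweights : ∀ x ∈ F, (if x ∈ G then w x else 0) = (F.card : 𝕜)⁻¹ := by
    refine (K.indep hF).eq_of_sum_eq_sum_subtype ?_ ?_
    · simp [hw₁, hcard]
    · simp only [ite_smul, zero_smul, ← Finset.sum_filter, Finset.filter_mem_eq_inter, hw]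
      rw [F.centroid_eq_centerMass hne, Finset.centerMass_eq_of_sum_1 _ _
        (F.sum_centroidWeights_eq_one_of_nonempty 𝕜 hne)]
      simp
  intro x hx
  by_contra hxG
  have := hweights x hx
  rw [if_neg hxG] at this
  exact inv_ne_zero hcard this.symm

variable {E : Type*} [AddCommGroup E] [Module ℝ E] [TopologicalSpace E] [ContinuousAdd E]
  [ContinuousSMul ℝ E] [DecidableEq E] {K : SimplicialComplex ℝ E}
  {e : K.space → Metric.sphere (0 : E3) 1}

theorem exists_subset_image_pos_of_odd {ι : Type*} [Fintype ι] (he : Continuous e)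
    (he_inj : Function.Injective e) {p : ι → E} (hp : Function.Injective p)
    {c : Metric.sphere (0 : E3) 1 → ι → ℝ} (hc : Continuous c) (hodd : ∀ x, c (-x) = -c x)
    (hface : ∀ x, ({i | 0 < c x i} : Finset ι).image p ∈ K.faces)
    {F : Finset E} (hF : F ∈ K.faces) : ∃ x, F ⊆ ({i | 0 < c x i} : Finset ι).image p := by
  let hull : Metric.sphere (0 : E3) 1 → Set E := fun x =>
    convexHull ℝ (({i | 0 < c x i} : Finset ι).image p : Finset E)
  let f : Metric.sphere (0 : E3) 1 → E := fun x => Finset.univ.centerMass (fun i => (c x i)⁺) p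
  have hsum : ∀ x, 0 < ∑ i, (c x i)⁺ := fun x => by
    obtain ⟨i, hi⟩ := (K.nonempty_of_mem_faces (hface x)).of_image
    exact Finset.sum_pos' (fun _ _ => posPart_nonneg _)
      ⟨i, Finset.mem_univ i, posPart_pos_iff.2 (Finset.mem_filter.1 hi).2⟩
  have f_mem : ∀ x, f x ∈ hull x := fun x => by
    simp only [f]
    rw [← Finset.centerMass_filter_ne_zero]
    refine Finset.centerMass_mem_convexHull _ (fun _ _ => posPart_nonneg _) ?_ fun i hi => ?_
    · rw [Finset.sum_filter_ne_zero]
      exact hsum x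
    · exact Finset.mem_coe.2 (Finset.mem_image_of_mem p (by simpa using hi))
  have f_mem_space : ∀ x, f x ∈ K.space := fun x => K.convexHull_subset_space (hface x) (f_mem x)
  have f_cont : Continuous f := by
    have hpos : ∀ i, Continuous fun x => (c x i)⁺ := fun i =>
      continuous_posPart.comp ((continuous_apply i).comp hc)
    exact ((continuous_finsetSum _ fun i _ => hpos i).inv₀ fun x => (hsum x).ne').smul
      (continuous_finsetSum _ fun i _ => (hpos i).smul continuous_const)
  have hull_disjoint : ∀ x, Disjoint (hull (-x)) (hull x) := fun x => by
    have hsupp : Disjoint ({i | 0 < c (-x) i} : Finset ι) ({i | 0 < c x i} : Finset ι) :=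
      Finset.disjoint_filter.2 fun i _ hi => by
        rw [hodd, Pi.neg_apply, neg_pos] at hi
        exact hi.not_gt
    rw [Set.disjoint_iff, ← convexHull_empty (𝕜 := ℝ), ← Finset.coe_empty,
      ← Finset.disjoint_iff_inter_eq_empty.1 ((Finset.disjoint_image hp).2 hsupp),
      Finset.coe_inter]
    exact K.inter_subset_convexHull (hface (-x)) (hface x)
  have hsurj : Function.Surjective fun x => (⟨f x, f_mem_space x⟩ : K.space) := by
    refine Function.Surjective.of_comp_left
      (surjective_of_apply_neg_ne (he.comp (f_cont.subtype_mk f_mem_space)) fun x hx => ?_) he_inj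
    exact (hull_disjoint x).ne_of_mem (f_mem _) (f_mem x) (congrArg Subtype.val (he_inj hx))
  have hcentroid := F.centroid_mem_convexHull (R := ℝ) (K.nonempty_of_mem_faces hF)
  obtain ⟨x, hx⟩ := hsurj ⟨_, K.convexHull_subset_space hF hcentroid⟩
  refine ⟨x, subset_of_centroid_mem_convexHull hF (hface x) ?_⟩
  have hfx : f x = F.centroid ℝ id := congrArg Subtype.val hx
  exact hfx ▸ f_mem x

/-- Odd coordinates on `ℝ³` indexed by the vertices of a triangular bipyramid (equator `Fin 3`,
apexes `Fin 2`). The equatorial coordinates sum to zero, as do the two apex coordinates, so the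
vertices with positive coordinate never include the whole equator or both apexes. -/
def bipyramidCoord (x : E3) : Fin 3 ⊕ Fin 2 → ℝ :=
  Sum.elim ![x 0, x 1, -x 0 - x 1] ![x 2, -x 2]

theorem continuous_bipyramidCoord : Continuous bipyramidCoord := by
  have hequator : Continuous fun x : E3 => ![x 0, x 1, -x 0 - x 1] := by fun_prop
  have hapex : Continuous fun x : E3 => ![x 2, -x 2] := by fun_prop
  refine continuous_pi ?_
  rintro (i | i)
  · exact (continuous_apply i).comp hequator
  · exact (continuous_apply i).comp hapex

theorem bipyramidCoord_neg (x : E3) : bipyramidCoord (-x) = -bipyramidCoord x := by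
  funext i
  rcases i with i | i <;> fin_cases i <;> simp [bipyramidCoord, sub_eq_add_neg, add_comm]

theorem exists_bipyramidCoord_pos {x : E3} (hx : x ≠ 0) : ∃ i, 0 < bipyramidCoord x i := by
  contrapose! hx
  have h₀ : x 0 ≤ 0 := hx (.inl 0)
  have h₁ : x 1 ≤ 0 := hx (.inl 1)
  have h₂ : -x 0 - x 1 ≤ 0 := hx (.inl 2)
  have h₃ : x 2 ≤ 0 := hx (.inr 0)
  have h₄ : -x 2 ≤ 0 := hx (.inr 1)
  ext i
  rw [PiLp.zero_apply]
  fin_cases i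
  · change x 0 = 0
    linarith
  · change x 1 = 0
    linarith
  · change x 2 = 0
    linarith

theorem exists_bipyramidCoord_pos_subset (x : E3) : ∃ (i : Fin 3) (j : Fin 2),
    ({k | 0 < bipyramidCoord x k} : Finset (Fin 3 ⊕ Fin 2)) ⊆ {.inl i, .inl (i + 1), .inr j} := by
  obtain ⟨i, hi⟩ : ∃ i : Fin 3, bipyramidCoord x (.inl (i + 2)) ≤ 0 := by
    by_contra! h
    have h₀ : 0 < x 0 := h 1
    have h₁ : 0 < x 1 := h 2
    have h₂ : 0 < -x 0 - x 1 := h 0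
    linarith
  obtain ⟨j, hj⟩ : ∃ j : Fin 2, bipyramidCoord x (.inr (j + 1)) ≤ 0 := by
    by_contra! h
    have h₀ : 0 < x 2 := h 1
    have h₁ : 0 < -x 2 := h 0
    linarith
  have equator_cases : ∀ i l : Fin 3, l = i ∨ l = i + 1 ∨ l = i + 2 := by decide
  have apex_cases : ∀ j l : Fin 2, l = j ∨ l = j + 1 := by decide
  refine ⟨i, j, fun k hk => ?_⟩
  have hk_pos : 0 < bipyramidCoord x k := (Finset.mem_filter.1 hk).2
  rcases k with l | l
  · rcases equator_cases i l with rfl | rfl | rfl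
    · simp
    · simp
    · exact absurd hi hk_pos.not_ge
  · rcases apex_cases j l with rfl | rfl
    · simp
    · exact absurd hj hk_pos.not_ge

theorem exists_subset_of_bipyramid (he : Continuous e) (he_inj : Function.Injective e)
    {a : Fin 3 → E} {n : Fin 2 → E} (hinj : Function.Injective (Sum.elim a n))
    (hface : ∀ i j, {a i, a (i + 1), n j} ∈ K.faces) {F : Finset E} (hF : F ∈ K.faces) :
    ∃ i j, F ⊆ {a i, a (i + 1), n j} := by
  have image_subset : ∀ x : E3, ∃ i j, ({k | 0 < bipyramidCoord x k} : Finset _).image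
      (Sum.elim a n) ⊆ {a i, a (i + 1), n j} := fun x => by
    obtain ⟨i, j, h⟩ := exists_bipyramidCoord_pos_subset x
    exact ⟨i, j, by simpa using Finset.image_subset_image (f := Sum.elim a n) h⟩
  obtain ⟨x, hx⟩ := exists_subset_image_pos_of_odd he he_inj hinj
    (continuous_bipyramidCoord.comp continuous_subtype_val) (fun x => bipyramidCoord_neg x)
    (fun x => by
      obtain ⟨i, j, h⟩ := image_subset x
      obtain ⟨k, hk⟩ := exists_bipyramidCoord_pos (ne_zero_of_mem_unit_sphere x)
      exact K.down_closed (hface i j) h ⟨_, Finset.mem_image_of_mem _ (by simpa using hk)⟩) hF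
  obtain ⟨i, j, h⟩ := image_subset x
  exact ⟨i, j, hx.trans h⟩

end SimplicialComplex

section FullSubcomplexes

variable {L : SimplicialComplex ℝ E3} {m : E3 → E3 → ℕ} {s : E3} {v : Fin 4 → E3}

theorem singleton_mem_link_iff {w : E3} : {w} ∈ link L s ↔ w ∈ linkVerts L s := by
  constructor
  · rintro ⟨-, hs, hsw⟩
    exact ⟨fun h => hs (by simp [h]), hsw⟩
  · rintro ⟨hne, hsw⟩
    exact ⟨L.down_closed hsw (by simp) (by simp), by simpa using hne.symm, hsw⟩

theorem mem_linkVerts_of_singleton_mem_star {w : E3} (hw : {w} ∈ star L s) (hne : w ≠ s) :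
    w ∈ linkVerts L s := by
  obtain ⟨-, G, hG, hsG, hwG⟩ := hw
  exact ⟨hne, L.down_closed hG (Finset.insert_subset hsG hwG) (by simp)⟩

theorem IsFullSubcomplex.star_of_link (h : IsFullSubcomplex L (link L s)) :
    IsFullSubcomplex L (star L s) := by
  refine ⟨fun F hF => hF.1, fun F hF hverts => ⟨hF, ?_⟩⟩
  by_cases hsF : s ∈ F
  · exact ⟨F, hF, hsF, subset_rfl⟩
  · have hlink : F ∈ link L s := h.2 F hF fun w hw => singleton_mem_link_iff.2 <|
      mem_linkVerts_of_singleton_mem_star (hverts w hw) (ne_of_mem_of_not_mem hw hsF)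
    exact ⟨insert s F, hlink.2.2, F.mem_insert_self s, F.subset_insert s⟩

theorem isFullSubcomplex_link_of_circuit (hlink : linkVerts L s = {v 0, v 1, v 2, v 3})
    (hface : ∀ i, {s, v i, v (i + 1)} ∈ L.faces) (hdiag : ∀ i, {v i, v (i + 2)} ∉ L.faces) :
    IsFullSubcomplex L (link L s) := by
  have consecutive : ∀ I : Finset (Fin 4), (∀ i ∈ I, i + 2 ∉ I) → ∃ i, I ⊆ {i, i + 1} := by
    decide
  refine ⟨fun F hF => hF.1, fun F hF hverts => ?_⟩
  have hF_link : ∀ w ∈ F, w ∈ linkVerts L s := fun w hw => singleton_mem_link_iff.1 (hverts w hw)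
  obtain ⟨i, hi⟩ := consecutive {i | v i ∈ F} fun i hi hi' => hdiag i <|
    L.down_closed hF (Finset.insert_subset (by simpa using hi) (by simpa using hi')) (by simp)
  have hF_sub : F ⊆ {v i, v (i + 1)} := fun w hw => by
    obtain ⟨j, rfl⟩ : ∃ j, v j = w := by
      have := hF_link w hw
      rw [hlink] at this
      simpa [Fin.exists_fin_succ, eq_comm] using this
    have := hi (Finset.mem_filter.2 ⟨Finset.mem_univ j, hw⟩)
    simp only [Finset.mem_insert, Finset.mem_singleton] at this ⊢
    exact this.imp (congrArg v) (congrArg v)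
  exact ⟨hF, fun hsF => (hF_link s hsF).1 rfl, L.down_closed (hface i)
    (Finset.insert_subset_insert s hF_sub) (F.insert_nonempty s)⟩

/-- Every 3-circuit with two consecutive edges labeled `2` bounds a 2-simplex. These are the
3-circuits which metric flagness fills whatever the third label is. -/
def RightAngledFlag (L : SimplicialComplex ℝ E3) (m : E3 → E3 → ℕ) : Prop :=
  ∀ s t u : E3, s ≠ t → t ≠ u → s ≠ u →
    {s, t} ∈ L.faces → {t, u} ∈ L.faces → {s, u} ∈ L.faces →
    m s t = 2 → m t u = 2 → {s, t, u} ∈ L.faces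

theorem MetricFlag.rightAngledFlag (h : MetricFlag L m)
    (hm : ∀ s t : E3, s ≠ t → {s, t} ∈ L.faces → 0 < m s t) : RightAngledFlag L m := by
  intro s t u hst htu hsu fst ftu fsu mst mtu
  refine (h s t u hst htu hsu fst ftu fsu).2 ?_
  have : 0 < 1 / (m u s : ℝ) :=
    one_div_pos.2 (mod_cast hm u s hsu.symm (Finset.pair_comm s u ▸ fsu))
  rw [mst, mtu]
  push_cast
  linarith

variable {e : L.space → Metric.sphere (0 : E3) 1}

theorem isSuspensionOfThreeGon_of_bipyramid (he : Continuous e) (he_inj : Function.Injective e)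
    {a : Fin 3 → E3} {n : Fin 2 → E3} (hinj : Function.Injective (Sum.elim a n))
    (hface : ∀ i j, {a i, a (i + 1), n j} ∈ L.faces) : IsSuspensionOfThreeGon L := by
  have equator_ne : ∀ i j, i ≠ j → a i ≠ a j := fun i j hij h =>
    hij (Sum.inl_injective (hinj h))
  have apex_ne : n 0 ≠ n 1 := fun h => zero_ne_one (Sum.inr_injective (hinj h))
  have apex_ne_equator : ∀ i j, n j ≠ a i := fun i j h => Sum.inr_ne_inl (hinj h)
  have equator_edge : ∀ i, {a i, a (i + 1)} ∈ L.faces := fun i =>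
    L.down_closed (hface i 0) (by grind) (by simp)
  have apex_edge : ∀ i j, {n j, a i} ∈ L.faces := fun i j =>
    L.down_closed (hface i j) (by grind) (by simp)
  refine ⟨n 0, n 1, a 0, a 1, a 2, ?_, fun w => ⟨fun hw => ?_, ?_⟩, equator_edge 0,
    equator_edge 1, Finset.pair_comm (a 2) (a 0) ▸ equator_edge 2, apex_edge 0 0, apex_edge 1 0,
    apex_edge 2 0, apex_edge 0 1, apex_edge 1 1, apex_edge 2 1, fun hw => ?_⟩
  · simp [apex_ne, apex_ne_equator, equator_ne]
  · obtain ⟨i, j, h⟩ := exists_subset_of_bipyramid he he_inj hinj hface hw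
    have equator_cases : ∀ l, a l = a 0 ∨ a l = a 1 ∨ a l = a 2 := by simp [Fin.forall_fin_succ]
    have apex_cases : ∀ l, n l = n 0 ∨ n l = n 1 := by simp
    obtain rfl | rfl | rfl : w = a i ∨ w = a (i + 1) ∨ w = n j := by simpa using h
    · exact .inr (.inr (equator_cases i))
    · exact .inr (.inr (equator_cases (i + 1)))
    · exact (apex_cases j).imp_right .inl
  · rintro (rfl | rfl | rfl | rfl | rfl)
    · exact L.down_closed (apex_edge 0 0) (by simp) (by simp)
    · exact L.down_closed (apex_edge 0 1) (by simp) (by simp)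
    · exact L.down_closed (equator_edge 0) (by simp) (by simp)
    · exact L.down_closed (equator_edge 1) (by simp) (by simp)
    · exact L.down_closed (equator_edge 2) (by simp) (by simp)
  · obtain ⟨i, j, h⟩ := exists_subset_of_bipyramid he he_inj hinj hface hw
    have apex_eq : ∀ l, n l ∈ ({n 0, n 1} : Finset E3) → n l = n j := fun l hl => by
      simpa [apex_ne_equator] using h hl
    exact apex_ne ((apex_eq 0 (by simp)).trans (apex_eq 1 (by simp)).symm)

theorem isSuspensionOfThreeGon_of_circuit (he : Continuous e) (he_inj : Function.Injective e)
    (hv : Function.Injective v) (hs : ∀ i, v i ≠ s)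
    (hface : ∀ i, {s, v i, v (i + 1)} ∈ L.faces)
    (half₁ : {v 0, v 1, v 2} ∈ L.faces) (half₂ : {v 2, v 3, v 0} ∈ L.faces) :
    IsSuspensionOfThreeGon L := by
  refine isSuspensionOfThreeGon_of_bipyramid he he_inj (a := ![s, v 0, v 2]) (n := ![v 1, v 3])
    ?_ fun j k => ?_
  · have hv_iff : ∀ i j, v i = v j ↔ i = j := fun _ _ => hv.eq_iff
    have hs' : ∀ i, s ≠ v i := fun i => (hs i).symm
    rintro (j | j) (k | k) h <;> fin_cases j <;> fin_cases k <;> simp_all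
  · fin_cases j <;> fin_cases k
    · exact hface 0
    · exact Finset.pair_comm (v 3) (v 0) ▸ hface 3
    · exact Finset.pair_comm (v 1) (v 2) ▸ half₁
    · change {v 0, v 2, v 3} ∈ L.faces
      rwa [Finset.insert_comm, Finset.pair_comm (v 0)]
    · change {v 2, s, v 1} ∈ L.faces
      rw [Finset.insert_comm, Finset.pair_comm]
      exact hface 1
    · exact Finset.insert_comm s (v 2) {v 3} ▸ hface 2

theorem diagonal_notMem_faces (he : Continuous e) (he_inj : Function.Injective e)
    (hflag : RightAngledFlag L m) (hnot : ¬ IsSuspensionOfThreeGon L)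
    (hv : Function.Injective v) (hs : ∀ i, v i ≠ s)
    (hface : ∀ i, {s, v i, v (i + 1)} ∈ L.faces) (hm : ∀ i, m (v i) (v (i + 1)) = 2)
    (i : Fin 4) : {v i, v (i + 2)} ∉ L.faces := by
  wlog hi : i = 0 generalizing v i
  · simpa using this (v := fun j => v (i + j)) (hv.comp (add_right_injective i))
      (fun j => hs (i + j)) (fun j => add_assoc i j 1 ▸ hface (i + j))
      (fun j => add_assoc i j 1 ▸ hm (i + j)) 0 rfl
  subst hi
  intro hdiag
  have hedge : ∀ j, {v j, v (j + 1)} ∈ L.faces := fun j =>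
    L.down_closed (hface j) (Finset.subset_insert _ _) (by simp)
  have half₁ : {v 0, v 1, v 2} ∈ L.faces := hflag _ _ _ (hv.ne (by decide)) (hv.ne (by decide))
    (hv.ne (by decide)) (hedge 0) (hedge 1) hdiag (hm 0) (hm 1)
  have half₂ : {v 2, v 3, v 0} ∈ L.faces := hflag _ _ _ (hv.ne (by decide)) (hv.ne (by decide))
    (hv.ne (by decide)) (hedge 2) (hedge 3) (Finset.pair_comm (v 0) (v 2) ▸ hdiag) (hm 2) (hm 3)
  exact hnot (isSuspensionOfThreeGon_of_circuit he he_inj hv hs hface half₁ half₂)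

end FullSubcomplexes

end CoxOrb

theorem link_and_star_full_of_fourEuclidean_general
    {L : SimplicialComplex ℝ E3} {m : E3 → E3 → ℕ} {e : L.space → Metric.sphere (0 : E3) 1}
    (he : Continuous e) (he_inj : Function.Injective e) (hflag : RightAngledFlag L m)
    (hnot : ¬ IsSuspensionOfThreeGon L) {s : E3} (hs : IsFourEuclidean L m s) :
    IsFullSubcomplex L (link L s) ∧ IsFullSubcomplex L (star L s) := by
  obtain ⟨-, v, hv, hlink, hface, hm⟩ := hs
  have hvs : ∀ i, v i ≠ s := fun i =>
    (show v i ∈ linkVerts L s by rw [hlink]; fin_cases i <;> simp).1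
  have hfull : IsFullSubcomplex L (link L s) := isFullSubcomplex_link_of_circuit hlink hface
    (diagonal_notMem_faces he he_inj hflag hnot hv hvs hface hm)
  exact ⟨hfull, hfull.star_of_link⟩

/-- If `L` is a metric flag labeled triangulation of the 2-sphere which is not
the suspension of a 3-gon and `s` is a 4-Euclidean vertex, then the link and
the closed star of `s` are full subcomplexes of `L`. -/
theorem link_and_star_full_of_fourEuclidean
    (L : SimplicialComplex ℝ E3) (m : E3 → E3 → ℕ)
    (hL : IsLabeledS2 L m) (hflag : MetricFlag L m)
    (hnot : ¬ IsSuspensionOfThreeGon L)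
    (s : E3) (hs : IsFourEuclidean L m s) :
    IsFullSubcomplex L (link L s) ∧ IsFullSubcomplex L (star L s) := by
  obtain ⟨e⟩ := hL.sphere
  exact link_and_star_full_of_fourEuclidean_general e.continuous e.injective
    (hflag.rightAngledFlag fun s t hne hst => two_pos.trans_le (hL.two_le s t hne hst)) hnot hs
end

section
/- Suppose L is a metric flag labeled triangulation of the 2-sphere. Then every infinite, maximal RA-suspension T in L is a full subcomplex of L; in particular, the two suspension points of T are not joined by an edge of L. -/
open Geometry

open CoxOrb

/-!
Suppose the suspension points `t` and `t'` of `T` were joined by an edge. Every vertex of the base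
is joined to both by edges with label `2`, so flagness makes it span a triangle with `{t, t'}`.
But an edge of a complex embedded in the `2`-sphere lies in at most two triangles: three of them
form a book, the product of a tripod and an interval, and
`p ↦ (retraction of p to the tripod, ∑ p i)` maps the unit sphere of `ℝ³` into it with `p` and `-p`
always having different images, against Borsuk–Ulam. An infinite base with at most two vertices
consists of two unjoined points `u` and `v`, and then `T` is properly contained in the suspension
of the edge `{t, t'}` from `u` and `v`, contradicting maximality. Once `t` and `t'` are not
joined, fullness of the base passes to `T`.
-/

namespace CoxOrb

section BorsukUlam

open Module

theorem exists_continuousMap_exp_comp_eq {A : Type*} [TopologicalSpace A] [SimplyConnectedSpace A]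
    [LocallyPathConnectedSpace A] (f : C(A, ℂ)) (hf : ∀ a, f a ≠ 0) :
    ∃ g : C(A, ℂ), ∀ a, Complex.exp (g a) = f a := by
  obtain ⟨a₀⟩ : Nonempty A := inferInstance
  obtain ⟨g, ⟨-, hg⟩, -⟩ := Complex.isCoveringMapOn_exp.existsUnique_continuousMap_lifts f
    (Complex.exp_log (hf a₀)) hf
  exact ⟨g, congrFun hg⟩

variable {W : Type*} [NormedAddCommGroup W] [NormedSpace ℝ W]

theorem exists_mem_sphere_eq_zero_of_odd (hW : 1 < Module.rank ℝ W) {r : ℝ} (hr : 0 ≤ r)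
    {d : W → ℝ} (hd : ContinuousOn d (Metric.sphere 0 r))
    (hodd : ∀ u ∈ Metric.sphere (0 : W) r, d (-u) = -d u) :
    ∃ u ∈ Metric.sphere (0 : W) r, d u = 0 := by
  obtain ⟨⟨u, hu⟩, hconn⟩ := isConnected_sphere hW (0 : W) hr
  have hneg : -u ∈ Metric.sphere (0 : W) r := by simpa using hu
  rcases le_total (d u) 0 with h | h
  · exact hconn.intermediate_value hu hneg hd ⟨h, by rw [hodd u hu]; exact neg_nonneg.2 h⟩
  · exact hconn.intermediate_value hneg hu hd ⟨by rw [hodd u hu]; exact neg_nonpos.2 h, h⟩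

-- Otherwise `f = exp ∘ g`, and `g (-u) - g u` is an odd multiple of `π i` on the unit circle, which
-- is impossible because its imaginary part is odd, hence vanishes somewhere.
theorem exists_eq_zero_of_odd_on_sphere (hW : 1 < Module.rank ℝ W) {f : W → ℂ} (hf : Continuous f)
    (hodd : ∀ u ∈ Metric.sphere (0 : W) 1, f (-u) = -f u) : ∃ u, f u = 0 := by
  by_contra! hne
  obtain ⟨g, hg⟩ := exists_continuousMap_exp_comp_eq ⟨f, hf⟩ hne
  have hexp : ∀ u ∈ Metric.sphere (0 : W) 1, Complex.exp (g (-u) - g u) = -1 := by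
    intro u hu
    simp only [Complex.exp_sub, hg, ContinuousMap.coe_mk, hodd u hu, neg_div, div_self (hne u)]
  obtain ⟨u, hu, him⟩ := exists_mem_sphere_eq_zero_of_odd hW zero_le_one
    (d := fun u => (g (-u) - g u).im) (by fun_prop) (by simp)
  have hre : (g (-u) - g u).re = 0 := by
    have h := congrArg norm (hexp u hu)
    rwa [Complex.norm_exp, norm_neg, norm_one, Real.exp_eq_one_iff] at h
  have h := hexp u hu
  rw [Complex.ext (z := g (-u) - g u) (w := 0) hre him, Complex.exp_zero] at h
  norm_num at h

variable {V : Type*} [NormedAddCommGroup V] [NormedSpace ℝ V]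

-- The unit disc is folded up to a hemisphere; outside the disc the height stays zero.
theorem exists_continuous_to_sphere_odd_on_sphere (hV : finrank ℝ V = 3) :
    ∃ x : ℝ × ℝ → Metric.sphere (0 : V) 1,
      Continuous x ∧ ∀ u ∈ Metric.sphere (0 : ℝ × ℝ) 1, x (-u) = -x u := by
  have := FiniteDimensional.of_finrank_eq_succ hV
  let e : ((ℝ × ℝ) × ℝ) ≃L[ℝ] V := .ofFinrankEq (by simp [hV])
  let y : ℝ × ℝ → V := fun u => e (u, max 0 (1 - ‖u‖))
  have hy : Continuous y := by fun_prop
  have hy0 : ∀ u, ‖y u‖ ≠ 0 := by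
    intro u h
    obtain ⟨rfl, h1⟩ : u = 0 ∧ 1 ≤ ‖u‖ := by simpa [y] using h
    norm_num at h1
  refine ⟨fun u => ⟨‖y u‖⁻¹ • y u, by simp [norm_smul, hy0]⟩, ?_, ?_⟩
  · exact ((hy.norm.inv₀ hy0).smul hy).subtype_mk _
  · intro u hu
    have hodd : y (-u) = -y u := by simp [y, ← map_neg, mem_sphere_zero_iff_norm.1 hu]
    ext1
    simp [hodd]

variable {F : Type*} [NormedAddCommGroup F] [NormedSpace ℝ F]

theorem borsuk_ulam_two_s4 (hV : finrank ℝ V = 3) (hF : finrank ℝ F = 2)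
    {f : Metric.sphere (0 : V) 1 → F} (hf : Continuous f) : ∃ x, f x = f (-x) := by
  have := FiniteDimensional.of_finrank_eq_succ hF
  let e : F ≃L[ℝ] ℂ := .ofFinrankEq (by simp [hF])
  obtain ⟨x, hx, hodd⟩ := exists_continuous_to_sphere_odd_on_sphere hV
  obtain ⟨u, hu⟩ := exists_eq_zero_of_odd_on_sphere (by simp [rank_prod, one_add_one_eq_two])
    (f := fun u => e (f (x u) - f (-x u))) (by fun_prop)
    (fun u hu => by simp [hodd u hu])
  exact ⟨x u, sub_eq_zero.1 (e.map_eq_zero_iff.1 hu)⟩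

theorem exists_antipodal_eq_of_not_surjective (hV : finrank ℝ V = 3) {S : Type*}
    [NormedAddCommGroup S] [InnerProductSpace ℝ S] (hS : finrank ℝ S = 3)
    {f : Metric.sphere (0 : V) 1 → Metric.sphere (0 : S) 1} (hf : Continuous f)
    (hsurj : ¬ Function.Surjective f) : ∃ x, f x = f (-x) := by
  simp only [Function.Surjective, not_forall, not_exists] at hsurj
  obtain ⟨pole, hpole⟩ := hsurj
  have : Fact (finrank ℝ S = 2 + 1) := ⟨hS⟩
  have hmem : ∀ x, f x ∈ (stereographic' 2 pole).source := by simpa using hpole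
  obtain ⟨x, hx⟩ := borsuk_ulam_two_s4 hV (by simp)
    ((stereographic' 2 pole).continuousOn.comp_continuous hf hmem)
  exact ⟨x, (stereographic' 2 pole).injOn (hmem x) (hmem (-x)) hx⟩

end BorsukUlam

section Tripod

/-- The `i`-th coordinate of a retraction of `ℝ³` onto the tripod formed by the three nonnegative
coordinate half-axes: the amount by which `p i` exceeds the other two entries, if positive. Indices
are taken modulo `3`. -/
def tripodCoord (p : Fin 3 → ℝ) (i : Fin 3) : ℝ :=
  max 0 (p i - max (p (i + 1)) (p (i + 2)))

theorem continuous_tripodCoord (i : Fin 3) : Continuous fun p => tripodCoord p i := by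
  unfold tripodCoord
  fun_prop

theorem tripodCoord_nonneg (p : Fin 3 → ℝ) (i : Fin 3) : 0 ≤ tripodCoord p i :=
  le_max_left _ _

theorem exists_forall_ne_tripodCoord_eq_zero (p : Fin 3 → ℝ) :
    ∃ i, ∀ j ≠ i, tripodCoord p j = 0 := by
  obtain ⟨i, hi⟩ := Finite.exists_max p
  refine ⟨i, fun j hj => max_eq_left (sub_nonpos.2 ?_)⟩
  obtain rfl | rfl : i = j + 1 ∨ i = j + 2 := by omega
  · exact (hi j).trans (le_max_left _ _)
  · exact (hi j).trans (le_max_right _ _)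

theorem tripodCoord_le_two_mul_norm (p : Fin 3 → ℝ) (i : Fin 3) : tripodCoord p i ≤ 2 * ‖p‖ := by
  have h : ∀ j, |p j| ≤ ‖p‖ := norm_le_pi_norm p
  refine max_le (by positivity) ?_
  linarith [le_max_left (p (i + 1)) (p (i + 2)), (abs_le.1 (h i)).2, (abs_le.1 (h (i + 1))).1]

theorem sum_tripodCoord_le_two_mul_norm (p : Fin 3 → ℝ) : ∑ i, tripodCoord p i ≤ 2 * ‖p‖ := by
  obtain ⟨i, hi⟩ := exists_forall_ne_tripodCoord_eq_zero p
  rw [Fintype.sum_eq_single i hi]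
  exact tripodCoord_le_two_mul_norm p i

theorem tripodCoord_pos_iff {p : Fin 3 → ℝ} {i : Fin 3} :
    0 < tripodCoord p i ↔ p (i + 1) < p i ∧ p (i + 2) < p i := by
  simp [tripodCoord]

-- A coordinate that is positive for both `p` and `-p` would belong to an entry of `p` that is both
-- the strict maximum and the strict minimum. So neither extremum is strict, and three real numbers
-- with this property coincide.
theorem eq_zero_of_tripodCoord_eq_neg {p : Fin 3 → ℝ} (h : tripodCoord p = tripodCoord (-p))
    (hsum : ∑ i, p i = 0) : p = 0 := by
  have hpos : ∀ i, ¬ 0 < tripodCoord p i := by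
    intro i hi
    have hmax := tripodCoord_pos_iff.1 hi
    have hmin := tripodCoord_pos_iff.1 (h ▸ hi)
    simp only [Pi.neg_apply, neg_lt_neg_iff] at hmin
    exact lt_asymm hmax.1 hmin.1
  have hmax : ∀ i, ¬ (p (i + 1) < p i ∧ p (i + 2) < p i) := fun i hi =>
    hpos i (tripodCoord_pos_iff.2 hi)
  have hmin : ∀ i, ¬ (p i < p (i + 1) ∧ p i < p (i + 2)) := fun i hi =>
    hpos i (h ▸ tripodCoord_pos_iff.2 (by simpa using hi))
  have hmax0 := hmax 0
  have hmax1 := hmax 1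
  have hmax2 := hmax 2
  have hmin0 := hmin 0
  have hmin1 := hmin 1
  have hmin2 := hmin 2
  simp only [Fin.reduceAdd, zero_add] at hmax0 hmax1 hmax2 hmin0 hmin1 hmin2
  rw [Fin.sum_univ_three] at hsum
  obtain ⟨h0, h1, h2⟩ : p 0 = 0 ∧ p 1 = 0 ∧ p 2 = 0 := by grind
  ext i
  fin_cases i <;> assumption

end Tripod

section Barycentric

open Convexity Finsupp

variable {𝕜 E : Type*} [Field 𝕜] [LinearOrder 𝕜] [AddCommGroup E] [Module 𝕜 E]

theorem stdSimplex_eq_of_affineIndependent {s : Finset E}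
    (hs : AffineIndependent 𝕜 ((↑) : s → E)) {w w' : StdSimplex 𝕜 E}
    (hw : w.weights.support ⊆ s) (hw' : w'.weights.support ⊆ s)
    (h : linearCombination 𝕜 id w.weights = linearCombination 𝕜 id w'.weights) : w = w' := by
  have htotal : ∀ w : StdSimplex 𝕜 E, w.weights.support ⊆ s → ∑ y : s, w.weights y = 1 := by
    intro w hw
    rw [Finset.sum_coe_sort s w.weights, ← sum_of_support_subset _ hw (fun _ a => a) (by simp),
      w.total]
  have hcomb : ∀ w : StdSimplex 𝕜 E, w.weights.support ⊆ s →
      Finset.univ.affineCombination 𝕜 ((↑) : s → E) (fun y => w.weights y) =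
        linearCombination 𝕜 id w.weights := by
    intro w hw
    rw [Finset.affineCombination_eq_linear_combination _ _ _ (htotal w hw),
      linearCombination_apply, sum_of_support_subset _ hw _ (by simp),
      Finset.sum_coe_sort s fun y => w.weights y • y]
    rfl
  have heq := (affineIndependent_iff_eq_of_fintype_affineCombination_eq 𝕜 _).1 hs _ _
    (htotal w hw) (htotal w' hw') ((hcomb w hw).trans (h.trans (hcomb w' hw').symm))
  ext y
  by_cases hy : y ∈ s
  · exact congrFun heq ⟨y, hy⟩
  · rw [notMem_support_iff.1 (mt (@hw y) hy), notMem_support_iff.1 (mt (@hw' y) hy)]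

variable [IsStrictOrderedRing 𝕜]

theorem mem_convexHull_iff_exists_stdSimplex {s : Finset E} {x : E} :
    x ∈ convexHull 𝕜 (s : Set E) ↔
      ∃ w : StdSimplex 𝕜 E, w.weights.support ⊆ s ∧ linearCombination 𝕜 id w.weights = x := by
  rw [Finset.mem_convexHull']
  constructor
  · rintro ⟨w, hw0, hw1, rfl⟩
    let w' : E →₀ 𝕜 := indicator s fun y _ => w y
    have hsupp : w'.support ⊆ s := support_indicator_subset ..
    have hw' : ∀ y ∈ s, w' y = w y := fun y hy => indicator_of_mem hy _
    refine ⟨⟨w', ?_, ?_⟩, hsupp, ?_⟩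
    · intro y
      by_cases hy : y ∈ s
      · exact (hw0 y hy).trans_eq (hw' y hy).symm
      · exact (indicator_of_notMem hy _).ge
    · rw [sum_of_support_subset _ hsupp _ (by simp), ← hw1]
      exact Finset.sum_congr rfl hw'
    · rw [linearCombination_apply, sum_of_support_subset _ hsupp _ (by simp)]
      exact Finset.sum_congr rfl fun y hy => by rw [hw' y hy, id]
  · rintro ⟨w, hsupp, rfl⟩
    refine ⟨w.weights, fun y _ => w.nonneg y, ?_, ?_⟩
    · rw [← sum_of_support_subset _ hsupp (fun _ a => a) (by simp), w.total]
    · rw [linearCombination_apply, sum_of_support_subset _ hsupp _ (by simp)]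
      rfl

theorem stdSimplex_eq_of_mem_faces {K : SimplicialComplex 𝕜 E} {s s' : Finset E}
    (hs : s ∈ K.faces) (hs' : s' ∈ K.faces) {w w' : StdSimplex 𝕜 E}
    (hw : w.weights.support ⊆ s) (hw' : w'.weights.support ⊆ s')
    (h : linearCombination 𝕜 id w.weights = linearCombination 𝕜 id w'.weights) :
    w = w' := by
  classical
  have hmem := K.inter_subset_convexHull hs hs'
    ⟨mem_convexHull_iff_exists_stdSimplex.2 ⟨w, hw, rfl⟩,
      mem_convexHull_iff_exists_stdSimplex.2 ⟨w', hw', h.symm⟩⟩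
  rw [← Finset.coe_inter, mem_convexHull_iff_exists_stdSimplex] at hmem
  obtain ⟨w₀, hw₀, h₀⟩ := hmem
  have heq := stdSimplex_eq_of_affineIndependent (K.indep hs)
    (hw₀.trans Finset.inter_subset_left) hw h₀
  have heq' := stdSimplex_eq_of_affineIndependent (K.indep hs')
    (hw₀.trans Finset.inter_subset_right) hw' (h₀.trans h)
  exact heq.symm.trans heq'

end Barycentric

section Book

open Convexity Finsupp Metric

variable {E : Type*}

/-- Barycentric coordinates of the image of `p` in the book whose pages are the triangles
`{t, t', v i}` with common spine `{t, t'}`: the tripod coordinates of `p` measure the distance from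
the spine, and the sum of the entries of `p` moves the image parallel to the spine. -/
noncomputable def bookWeights (t t' : E) (v : Fin 3 → E) (p : Fin 3 → ℝ) : E →₀ ℝ :=
  ∑ i, single (v i) (tripodCoord p i) + single t ((1 - ∑ i, tripodCoord p i) / 2 - ∑ i, p i) +
    single t' ((1 - ∑ i, tripodCoord p i) / 2 + ∑ i, p i)

variable {t t' : E} {v : Fin 3 → E}

theorem bookWeights_nonneg {p : Fin 3 → ℝ} (hp : ‖p‖ ≤ 1 / 8) : 0 ≤ bookWeights t t' v p := by
  have hcoord := sum_tripodCoord_le_two_mul_norm p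
  have hsum : |∑ i, p i| ≤ 3 * ‖p‖ := by
    simpa using (Finset.abs_sum_le_sum_abs p Finset.univ).trans (Pi.sum_norm_apply_le_norm p)
  have habs := abs_le.1 hsum
  refine add_nonneg (add_nonneg (Finset.sum_nonneg fun i _ => ?_) ?_) ?_ <;>
    rw [single_nonneg]
  · exact tripodCoord_nonneg p i
  · linarith
  · linarith

theorem sum_bookWeights (p : Fin 3 → ℝ) : (bookWeights t t' v p).sum (fun _ a => a) = 1 := by
  change degree (bookWeights t t' v p) = 1
  simp only [bookWeights, map_add, map_sum, degree_single]
  ring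

theorem exists_support_bookWeights_subset [DecidableEq E] (t t' : E) (v : Fin 3 → E)
    (p : Fin 3 → ℝ) : ∃ i, (bookWeights t t' v p).support ⊆ {t, t', v i} := by
  obtain ⟨i, hi⟩ := exists_forall_ne_tripodCoord_eq_zero p
  refine ⟨i, fun y hy => ?_⟩
  rw [bookWeights, Fintype.sum_eq_single i fun j hj => by rw [hi j hj, single_zero]] at hy
  contrapose! hy
  simp only [Finset.mem_insert, Finset.mem_singleton, not_or] at hy
  simp [hy]

theorem bookWeights_apply_page (hv : v.Injective) (hvt : ∀ i, v i ≠ t) (hvt' : ∀ i, v i ≠ t')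
    (p : Fin 3 → ℝ) (i : Fin 3) : bookWeights t t' v p (v i) = tripodCoord p i := by
  classical
  simp [bookWeights, single_apply, hv.eq_iff, (hvt _).symm, (hvt' _).symm]

theorem bookWeights_apply_spine (ht : t ≠ t') (hvt' : ∀ i, v i ≠ t') (p : Fin 3 → ℝ) :
    bookWeights t t' v p t' = (1 - ∑ i, tripodCoord p i) / 2 + ∑ i, p i := by
  simp [bookWeights, ht, hvt']

theorem eq_zero_of_bookWeights_eq_neg (ht : t ≠ t') (hv : v.Injective) (hvt : ∀ i, v i ≠ t)
    (hvt' : ∀ i, v i ≠ t') {p : Fin 3 → ℝ} (h : bookWeights t t' v p = bookWeights t t' v (-p)) :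
    p = 0 := by
  have hcoord : tripodCoord p = tripodCoord (-p) := by
    ext i
    simpa only [bookWeights_apply_page hv hvt hvt'] using DFunLike.congr_fun h (v i)
  refine eq_zero_of_tripodCoord_eq_neg hcoord ?_
  have hspine := DFunLike.congr_fun h t'
  simp only [bookWeights_apply_spine ht hvt', hcoord, Pi.neg_apply, Finset.sum_neg_distrib]
    at hspine
  linarith

/-- The map `bookWeights` on the unit sphere of `ℝ³` (with the sup norm), as a point of the standard
simplex on `E`. The factor `1 / 8` makes all weights nonnegative. -/
noncomputable def bookSimplex (t t' : E) (v : Fin 3 → E) (x : sphere (0 : Fin 3 → ℝ) 1) :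
    StdSimplex ℝ E where
  weights := bookWeights t t' v ((1 / 8 : ℝ) • x)
  nonneg := bookWeights_nonneg (by simp [norm_smul])
  total := sum_bookWeights _

theorem bookSimplex_neg_ne (ht : t ≠ t') (hv : v.Injective) (hvt : ∀ i, v i ≠ t)
    (hvt' : ∀ i, v i ≠ t') (x : sphere (0 : Fin 3 → ℝ) 1) :
    bookSimplex t t' v x ≠ bookSimplex t t' v (-x) := by
  intro h
  have h0 : (1 / 8 : ℝ) • (x : Fin 3 → ℝ) = 0 :=
    eq_zero_of_bookWeights_eq_neg ht hv hvt hvt' <| by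
      simpa [bookSimplex] using congrArg StdSimplex.weights h
  exact ne_zero_of_mem_unit_sphere x ((smul_eq_zero_iff_right (by norm_num)).1 h0)

theorem bookSimplex_ne_single (hv : v.Injective) (hvt : ∀ i, v i ≠ t)
    (hvt' : ∀ i, v i ≠ t') (x : sphere (0 : Fin 3 → ℝ) 1) (i : Fin 3) :
    bookSimplex t t' v x ≠ .single (v i) := by
  intro h
  have h1 : tripodCoord ((1 / 8 : ℝ) • x) i = 1 := by
    rw [← bookWeights_apply_page hv hvt hvt']
    simpa [bookSimplex] using DFunLike.congr_fun (congrArg StdSimplex.weights h) (v i)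
  have hle := tripodCoord_le_two_mul_norm ((1 / 8 : ℝ) • (x : Fin 3 → ℝ)) i
  rw [h1, norm_smul, norm_eq_of_mem_sphere] at hle
  norm_num at hle

variable [AddCommGroup E] [Module ℝ E] [TopologicalSpace E] [ContinuousAdd E] [ContinuousSMul ℝ E]

theorem continuous_linearCombination_bookSimplex (t t' : E) (v : Fin 3 → E) :
    Continuous fun x => linearCombination ℝ id (bookSimplex t t' v x).weights := by
  have hcoord := continuous_tripodCoord
  simp only [bookSimplex, bookWeights, map_add, map_sum, linearCombination_single, id]
  fun_prop

theorem exists_continuous_antipodal_ne_of_three_triangles [DecidableEq E]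
    {K : SimplicialComplex ℝ E} (ht : t ≠ t') (hv : v.Injective) (hvt : ∀ i, v i ≠ t)
    (hvt' : ∀ i, v i ≠ t') (hK : ∀ i, {t, t', v i} ∈ K.faces) :
    ∃ g : sphere (0 : Fin 3 → ℝ) 1 → K.space,
      Continuous g ∧ (∀ x, g x ≠ g (-x)) ∧ ¬ g.Surjective := by
  choose page hpage using fun x : sphere (0 : Fin 3 → ℝ) 1 =>
    exists_support_bookWeights_subset t t' v ((1 / 8 : ℝ) • x)
  have hmem : ∀ x, linearCombination ℝ id (bookSimplex t t' v x).weights ∈ K.space := fun x =>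
    K.convexHull_subset_space (hK (page x))
      (mem_convexHull_iff_exists_stdSimplex.2 ⟨_, hpage x, rfl⟩)
  have hv0 : {v 0} ∈ K.faces := K.down_closed (hK 0) (by simp) (by simp)
  refine ⟨fun x => ⟨_, hmem x⟩, (continuous_linearCombination_bookSimplex t t' v).subtype_mk _,
    fun x h => bookSimplex_neg_ne ht hv hvt hvt' x ?_, fun hsurj => ?_⟩
  · exact stdSimplex_eq_of_mem_faces (hK _) (hK _) (hpage x) (hpage (-x)) (congrArg Subtype.val h)
  · obtain ⟨x, hx⟩ := hsurj ⟨v 0, K.vertices_subset_space hv0⟩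
    refine bookSimplex_ne_single hv hvt hvt' x 0 ?_
    exact stdSimplex_eq_of_mem_faces (hK _) hv0 (hpage x) support_single_subset
      (by simpa using congrArg Subtype.val hx)

theorem encard_triangles_le_two_of_injective_to_sphere [DecidableEq E]
    {K : SimplicialComplex ℝ E} {S : Type*} [NormedAddCommGroup S] [InnerProductSpace ℝ S]
    (hS : Module.finrank ℝ S = 3) {f : K.space → sphere (0 : S) 1} (hf : Continuous f)
    (hinj : f.Injective) (ht : t ≠ t') :
    {v | v ≠ t ∧ v ≠ t' ∧ {t, t', v} ∈ K.faces}.encard ≤ 2 := by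
  by_contra! hlt
  obtain ⟨s, hs, hcard⟩ := Set.exists_subset_encard_eq (Order.add_one_le_of_lt hlt)
  obtain ⟨a, b, c, hab, hac, hbc, rfl⟩ := Set.encard_eq_three.1 (hcard.trans (by norm_num))
  have hmem : ∀ i, ![a, b, c] i ∈ {v | v ≠ t ∧ v ≠ t' ∧ {t, t', v} ∈ K.faces} := by
    intro i
    exact hs (by fin_cases i <;> simp)
  have hv : Function.Injective ![a, b, c] := by
    intro i j
    fin_cases i <;> fin_cases j <;> simp [hab, hac, hbc, hab.symm, hac.symm, hbc.symm]
  obtain ⟨g, hg, hanti, hsurj⟩ := exists_continuous_antipodal_ne_of_three_triangles ht hv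
    (fun i => (hmem i).1) (fun i => (hmem i).2.1) (fun i => (hmem i).2.2)
  obtain ⟨x, hx⟩ := exists_antipodal_eq_of_not_surjective (by simp) hS (hf.comp hg)
    (fun h => hsurj (h.of_comp_left hinj))
  exact hanti x (hinj hx)

end Book

section Suspension

variable {Z T : Set (Finset E3)} {t t' u v : E3}

theorem mem_joinSusp_iff (hne : t ≠ t') (hempty : ∅ ∉ Z) (ht : ∀ F ∈ Z, t ∉ F)
    (ht' : ∀ F ∈ Z, t' ∉ F) {F : Finset E3} :
    F ∈ joinSusp Z t t' ↔
      F.Nonempty ∧ ¬ (t ∈ F ∧ t' ∈ F) ∧ (F \ {t, t'} = ∅ ∨ F \ {t, t'} ∈ Z) := by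
  have hsdiff : ∀ G ∈ Z, G \ {t, t'} = G := fun G hG => by
    rw [Finset.sdiff_eq_self_iff_disjoint]
    simp [ht G hG, ht' G hG]
  simp only [joinSusp, Set.mem_union, Set.mem_insert_iff, Set.mem_singleton_iff, Set.mem_image]
  constructor
  · rintro (((hF | rfl | rfl) | ⟨G, hG, rfl⟩) | ⟨G, hG, rfl⟩)
    · have := Finset.nonempty_iff_ne_empty.2 (ne_of_mem_of_not_mem hF hempty)
      simp [hsdiff, hF, ht, this]
    · simp [hne.symm]
    · simp [hne]
    · simp [Finset.insert_sdiff_of_mem, hsdiff, hG, ht', hne.symm]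
    · simp [Finset.insert_sdiff_of_mem, hsdiff, hG, ht, hne]
  · rintro ⟨hF, hboth, hbase⟩
    by_cases htF : t ∈ F
    · have hcone : insert t (F \ {t, t'}) = F := by
        rw [Finset.sdiff_insert, Finset.sdiff_singleton_eq_erase,
          Finset.erase_eq_of_notMem fun h => hboth ⟨htF, h⟩, Finset.insert_erase htF]
      rcases hbase with h0 | hZ
      · exact .inl (.inl (.inr (.inl (by rw [← hcone, h0]; rfl))))
      · exact .inl (.inr ⟨_, hZ, hcone⟩)
    by_cases ht'F : t' ∈ F
    · have hcone : insert t' (F \ {t, t'}) = F := by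
        rw [Finset.pair_comm, Finset.sdiff_insert, Finset.sdiff_singleton_eq_erase,
          Finset.erase_eq_of_notMem htF, Finset.insert_erase ht'F]
      rcases hbase with h0 | hZ
      · exact .inl (.inl (.inr (.inr (by rw [← hcone, h0]; rfl))))
      · exact .inr ⟨_, hZ, hcone⟩
    · have hF' : F \ {t, t'} = F := by
        rw [Finset.sdiff_eq_self_iff_disjoint]
        simp [htF, ht'F]
      rw [hF'] at hbase
      exact .inl (.inl (.inl (hbase.resolve_left hF.ne_empty)))

variable {L : SimplicialComplex ℝ E3} {m : E3 → E3 → ℕ}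

/-- The complex of all nonempty faces of the simplex with vertex set `s`. -/
def simplexComplex (s : Finset E3) : Set (Finset E3) :=
  {F | F.Nonempty ∧ F ⊆ s}

theorem mem_joinSusp_simplexComplex_iff {s : Finset E3} (huv : u ≠ v) (hu : u ∉ s) (hv : v ∉ s)
    {F : Finset E3} : F ∈ joinSusp (simplexComplex s) u v ↔
      F.Nonempty ∧ ¬ (u ∈ F ∧ v ∈ F) ∧ F ⊆ {u, v} ∪ s := by
  rw [mem_joinSusp_iff huv (by simp [simplexComplex]) (fun F hF h => hu (hF.2 h))
    (fun F hF h => hv (hF.2 h))]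
  have hsub : F \ {u, v} ⊆ s ↔ F ⊆ {u, v} ∪ s := sdiff_le_iff
  rw [← hsub]
  rcases (F \ {u, v}).eq_empty_or_nonempty with hempty | hbase
  · simp [hempty]
  · simp [hbase, hbase.ne_empty, simplexComplex]

theorem isRASuspData_simplexComplex {s : Finset E3} (hs : s.Nonempty) (huv : u ≠ v) (hu : u ∉ s)
    (hv : v ∉ s) (hus : insert u s ∈ L.faces) (hvs : insert v s ∈ L.faces)
    (hlabel : ∀ w ∈ s, m u w = 2 ∧ m v w = 2) :
    IsRASuspData L m (joinSusp (simplexComplex s) u v) (simplexComplex s) u v where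
  subset F hF := by
    obtain ⟨hne, hboth, hsub⟩ := (mem_joinSusp_simplexComplex_iff huv hu hv).1 hF
    by_cases huF : u ∈ F
    · exact L.down_closed hus (fun w hw => by have := hsub hw; aesop) hne
    · exact L.down_closed hvs (fun w hw => by have := hsub hw; aesop) hne
  zsubset F hF := L.down_closed hus (hF.2.trans (Finset.subset_insert u s)) hF.1
  zdown F hF G hG hne := ⟨hne, hG.trans hF.2⟩
  znonempty := ⟨s, hs, subset_rfl⟩
  tne := huv
  t_notin F hF h := hu (hF.2 h)
  t'_notin F hF h := hv (hF.2 h)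
  labels w hw := hlabel w (hw.2 (by simp))
  eq := rfl

theorem exists_eq_pair_of_infiniteBase (hempty : ∅ ∉ Z) (hne : Z.Nonempty)
    (hdown : ∀ F ∈ Z, ∀ G ⊆ F, G.Nonempty → G ∈ Z) (hinf : InfiniteBase Z)
    (hcard : {v | {v} ∈ Z}.encard ≤ 2) : ∃ u v, u ≠ v ∧ Z = {{u}, {v}} := by
  have hvert : ∀ F ∈ Z, ∀ v ∈ F, {v} ∈ Z := fun F hF v hv =>
    hdown F hF {v} (by simpa using hv) (by simp)
  have hface : ∀ F ∈ Z, F.Nonempty := fun F hF =>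
    Finset.nonempty_iff_ne_empty.2 (ne_of_mem_of_not_mem hF hempty)
  obtain ⟨F₀, hF₀⟩ := hne
  obtain ⟨u, hu⟩ := hface F₀ hF₀
  replace hu := hvert F₀ hF₀ u hu
  obtain ⟨v, hv, hvu⟩ : ∃ v, {v} ∈ Z ∧ v ≠ u := by
    by_contra! honly
    refine hinf.1 ⟨u, Set.Subset.antisymm (fun F hF => ?_) (by simpa using hu)⟩
    exact (hface F hF).subset_singleton_iff.1 fun v hv => by simpa using honly v (hvert F hF v hv)
  have hV : {u, v} = {w | {w} ∈ Z} :=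
    (Set.finite_of_encard_le_coe hcard).eq_of_subset_of_encard_le'
      (Set.insert_subset hu (Set.singleton_subset_iff.2 hv)) (by rwa [Set.encard_pair hvu.symm])
  have hcases : ∀ F ∈ Z, F = {u} ∨ F = {v} ∨ F = {u, v} := by
    intro F hF
    have hsub : (F : Set E3) ⊆ {u, v} := fun w hw => hV.ge (hvert F hF w hw)
    exact_mod_cast (Finset.coe_nonempty.2 (hface F hF)).subset_pair_iff_eq.1 hsub
  have hpair : {u, v} ∉ Z := fun hp => hinf.2 ⟨u, v, hvu.symm,
    Set.Subset.antisymm hcases (by rintro _ (rfl | rfl | rfl) <;> assumption)⟩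
  refine ⟨u, v, hvu.symm, Set.Subset.antisymm (fun F hF => ?_) ?_⟩
  · have hF' : F ≠ {u, v} := ne_of_mem_of_not_mem hF hpair
    simpa [hF'] using hcases F hF
  · rintro _ (rfl | rfl) <;> assumption

/-- Three pairwise joined vertices span a triangle as soon as two of the three edges have label `2`:
the part of metric flagness that governs right-angled suspensions. -/
def IsRightAngledFlag (L : SimplicialComplex ℝ E3) (m : E3 → E3 → ℕ) : Prop :=
  ∀ s t u : E3, s ≠ t → t ≠ u → s ≠ u →
    {s, t} ∈ L.faces → {t, u} ∈ L.faces → {s, u} ∈ L.faces →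
    m s u = 2 → m t u = 2 → {s, t, u} ∈ L.faces

theorem MetricFlag.isRightAngledFlag (hflag : MetricFlag L m) (hL : IsLabeledS2 L m) :
    IsRightAngledFlag L m := by
  intro s t u hst htu hsu est etu esu hsu2 htu2
  refine (hflag s t u hst htu hsu est etu esu).2 ?_
  have hpos : 0 < (m s t : ℝ) := by exact_mod_cast two_pos.trans_le (hL.two_le s t hst est)
  have hinv : 0 < 1 / (m s t : ℝ) := by positivity
  rw [htu2, hL.symm u s, hsu2]
  push_cast
  linarith

namespace IsRASuspData

theorem empty_notMem (h : IsRASuspData L m T Z t t') : ∅ ∉ Z :=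
  fun h0 => L.empty_notMem (h.zsubset h0)

theorem ne_left (h : IsRASuspData L m T Z t t') (hv : {v} ∈ Z) : v ≠ t := by
  rintro rfl
  exact h.t_notin _ hv (Finset.mem_singleton_self v)

theorem ne_right (h : IsRASuspData L m T Z t t') (hv : {v} ∈ Z) : v ≠ t' := by
  rintro rfl
  exact h.t'_notin _ hv (Finset.mem_singleton_self v)

theorem mem_iff (h : IsRASuspData L m T Z t t') {F : Finset E3} :
    F ∈ T ↔ F.Nonempty ∧ ¬ (t ∈ F ∧ t' ∈ F) ∧ (F \ {t, t'} = ∅ ∨ F \ {t, t'} ∈ Z) := by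
  rw [h.eq, mem_joinSusp_iff h.tne h.empty_notMem h.t_notin h.t'_notin]

theorem pair_notMem (h : IsRASuspData L m T Z t t') : {t, t'} ∉ T := by
  simp [h.mem_iff]

theorem pair_notMem_faces_of_isFullSubcomplex (h : IsRASuspData L m T Z t t')
    (hfull : IsFullSubcomplex L T) : {t, t'} ∉ L.faces := fun hedge =>
  h.pair_notMem <| hfull.2 _ hedge <| by simp [h.mem_iff, h.tne, h.tne.symm]

theorem isFullSubcomplex (h : IsRASuspData L m T Z t t') (hZ : IsFullSubcomplex L Z)
    (hedge : {t, t'} ∉ L.faces) : IsFullSubcomplex L T := by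
  refine ⟨h.subset, fun F hF hvert => h.mem_iff.2 ⟨L.nonempty_of_mem_faces hF, ?_, ?_⟩⟩
  · rintro ⟨ht, ht'⟩
    exact hedge (L.down_closed hF (Finset.insert_subset ht (by simpa using ht')) (by simp))
  · rcases (F \ {t, t'}).eq_empty_or_nonempty with hempty | hbase
    · exact .inl hempty
    · refine .inr (hZ.2 _ (L.down_closed hF Finset.sdiff_subset hbase) fun v hv => ?_)
      have hsdiff : ({v} : Finset E3) \ {t, t'} = {v} :=
        Finset.sdiff_eq_self_iff_disjoint.2
          (Finset.disjoint_singleton_left.2 (Finset.mem_sdiff.1 hv).2)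
      simpa [hsdiff] using (h.mem_iff.1 (hvert v (Finset.sdiff_subset hv))).2.2

theorem triangle_mem_faces (h : IsRASuspData L m T Z t t') (hflag : IsRightAngledFlag L m)
    (hedge : {t, t'} ∈ L.faces) (hv : {v} ∈ Z) : {t, t', v} ∈ L.faces := by
  have hvt := h.ne_left hv
  have hvt' := h.ne_right hv
  have hsdiff : ∀ s ∈ ({t, t'} : Finset E3), ({s, v} : Finset E3) \ {t, t'} = {v} := by grind
  refine hflag t t' v h.tne hvt'.symm hvt.symm hedge (h.subset (h.mem_iff.2 ?_))
    (h.subset (h.mem_iff.2 ?_)) (h.labels v hv).1 (h.labels v hv).2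
  · simp [hsdiff, hv, h.tne, hvt.symm]
  · simp [hsdiff, hv, h.tne.symm, hvt'.symm]

theorem subset_joinSusp_simplexComplex_pair
    (h : IsRASuspData L m T {{u}, {v}} t t') (huv : u ≠ v) (hu : u ∉ ({t, t'} : Finset E3))
    (hv : v ∉ ({t, t'} : Finset E3)) : T ⊆ joinSusp (simplexComplex {t, t'}) u v := by
  intro F hF
  obtain ⟨hne, -, hbase⟩ := h.mem_iff.1 hF
  replace hbase : F \ {t, t'} = ∅ ∨ F \ {t, t'} = {u} ∨ F \ {t, t'} = {v} := hbase
  have hsub : F \ {t, t'} ⊆ {u, v} := by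
    rcases hbase with h0 | h0 | h0 <;> simp [h0]
  refine (mem_joinSusp_simplexComplex_iff huv hu hv).2 ⟨hne, fun ⟨huF, hvF⟩ => ?_, ?_⟩
  · have huF' := Finset.mem_sdiff.2 ⟨huF, hu⟩
    have hvF' := Finset.mem_sdiff.2 ⟨hvF, hv⟩
    rcases hbase with h0 | h0 | h0 <;> rw [h0] at huF' hvF' <;> simp_all
  · rw [Finset.union_comm]
    exact sdiff_le_iff.1 hsub

theorem exists_isRASusp_ssuperset_of_pair (hsymm : ∀ s t, m s t = m t s)
    (hflag : IsRightAngledFlag L m) (huv : u ≠ v) (h : IsRASuspData L m T {{u}, {v}} t t')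
    (hedge : {t, t'} ∈ L.faces) : ∃ T', IsRASusp L m T' ∧ T ⊂ T' := by
  have hnotMem : ∀ w, {w} ∈ ({{u}, {v}} : Set (Finset E3)) → w ∉ ({t, t'} : Finset E3) :=
    fun w hw => by simp [h.ne_left hw, h.ne_right hw]
  have htriangle : ∀ w, {w} ∈ ({{u}, {v}} : Set (Finset E3)) → insert w {t, t'} ∈ L.faces := by
    intro w hw
    rw [Finset.insert_comm, Finset.pair_comm w]
    exact h.triangle_mem_faces hflag hedge hw
  have hu := hnotMem u (by simp)
  have hv := hnotMem v (by simp)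
  have hsusp := isRASuspData_simplexComplex (by simp) huv hu hv (htriangle u (by simp))
    (htriangle v (by simp)) (m := m) (by simp [hsymm u, hsymm v, h.labels])
  refine ⟨_, ⟨_, _, _, hsusp⟩, h.subset_joinSusp_simplexComplex_pair huv hu hv, fun hsub =>
    h.pair_notMem (hsub ?_)⟩
  refine (mem_joinSusp_simplexComplex_iff huv hu hv).2 ⟨by simp, fun h => hu h.1, ?_⟩
  exact Finset.subset_union_right

theorem pair_notMem_faces_of_maximal {f : L.space → Metric.sphere (0 : E3) 1}
    (hf : Continuous f) (hinj : f.Injective) (hsymm : ∀ s t, m s t = m t s)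
    (hflag : IsRightAngledFlag L m) (h : IsRASuspData L m T Z t t') (hinf : InfiniteBase Z)
    (hmax : ∀ T', IsRASusp L m T' → T ⊆ T' → T = T') : {t, t'} ∉ L.faces := by
  intro hedge
  have hsub : {v | {v} ∈ Z} ⊆ {v | v ≠ t ∧ v ≠ t' ∧ {t, t', v} ∈ L.faces} := fun v hv =>
    ⟨h.ne_left hv, h.ne_right hv, h.triangle_mem_faces hflag hedge hv⟩
  have hcard : {v | {v} ∈ Z}.encard ≤ 2 := (Set.encard_le_encard hsub).trans
    (encard_triangles_le_two_of_injective_to_sphere (by simp) hf hinj h.tne)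
  obtain ⟨u, v, huv, rfl⟩ :=
    exists_eq_pair_of_infiniteBase h.empty_notMem h.znonempty h.zdown hinf hcard
  obtain ⟨T', hT', hss⟩ := h.exists_isRASusp_ssuperset_of_pair hsymm hflag huv hedge
  exact hss.ne (hmax T' hT' hss.subset)

end IsRASuspData

end Suspension

end CoxOrb

theorem infMaxRASusp_full_general
    (L : SimplicialComplex ℝ E3) (m : E3 → E3 → ℕ)
    {f : L.space → Metric.sphere (0 : E3) 1} (hf : Continuous f) (hinj : f.Injective)
    (hsymm : ∀ s t, m s t = m t s) (hflag : IsRightAngledFlag L m)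
    (T : Set (Finset E3)) (hT : IsInfMaxRASusp L m T) :
    IsFullSubcomplex L T ∧
    ∀ (Z : Set (Finset E3)) (t t' : E3), IsRASuspData L m T Z t t' →
      ({t, t'} : Finset E3) ∉ L.faces := by
  obtain ⟨⟨Z, t, t', h, hinf, hZ⟩, hmax⟩ := hT
  have hfull : IsFullSubcomplex L T := h.isFullSubcomplex hZ <|
    h.pair_notMem_faces_of_maximal hf hinj hsymm hflag hinf hmax
  exact ⟨hfull, fun _ _ _ h' => h'.pair_notMem_faces_of_isFullSubcomplex hfull⟩

/-- Every infinite, maximal RA-suspension `T` in a metric flag labeled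
triangulation of the 2-sphere is a full subcomplex of `L`; in particular the
suspension points of `T` are not joined by an edge of `L`. -/
theorem infMaxRASusp_full
    (L : SimplicialComplex ℝ E3) (m : E3 → E3 → ℕ)
    (hL : IsLabeledS2 L m) (hflag : MetricFlag L m)
    (T : Set (Finset E3)) (hT : IsInfMaxRASusp L m T) :
    IsFullSubcomplex L T ∧
    ∀ (Z : Set (Finset E3)) (t t' : E3), IsRASuspData L m T Z t t' →
      ({t, t'} : Finset E3) ∉ L.faces := by
  obtain ⟨φ⟩ := hL.sphere
  exact infMaxRASusp_full_general L m φ.continuous φ.injective hL.symm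
    (hflag.isRightAngledFlag hL) T hT
end
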